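/- arXiv:2010.10490 — 4 statements merged into one kernel-verified Lean document; each statement's English description precedes it below -/
import Mathlib

section
/- There exist a complex number c' and a constant C > 0 such that for every real σ with 1/2 < σ ≤ 1 the series ∑_p β1(p)·conj(β2(p))/p^{2σ} over all primes p converges absolutely and | ∑_p β1(p)·conj(β2(p))/p^{2σ} − δξ log(1/(σ − 1/2)) − c' | ≤ C (σ − 1/2) log(1/(σ − 1/2)). -/
open Finset ComplexConjugate

open MeasureTheory Set in
theorem integrableOn_log_mul_exp_neg_mul {s : ℝ} (hs : 0 < s) :
    IntegrableOn (fun u : ℝ => Real.log u * Real.exp (-(s * u))) (Ioi 0) := by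
  have h_one : IntegrableOn (fun u : ℝ => Real.log u * Real.exp (-u)) (Ioi 0) := by
    have hdom := ((Real.GammaIntegral_convergent (s := 1 / 2) (by norm_num)).const_mul 2).add
      (Real.GammaIntegral_convergent (s := 2) (by norm_num))
    refine Integrable.mono' hdom (by fun_prop) ?_
    filter_upwards [ae_restrict_mem measurableSet_Ioi] with u hu
    have hu : 0 < u := hu
    have hneg : -Real.log u ≤ 2 * u ^ (1 / 2 - 1 : ℝ) := by
      have := Real.log_le_rpow_div (inv_nonneg.2 hu.le) (ε := 1 / 2) (by norm_num)
      rw [Real.log_inv, Real.inv_rpow hu.le, ← Real.rpow_neg hu.le] at this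
      norm_num at this ⊢
      linarith
    have hpos : Real.log u ≤ u := (Real.log_le_sub_one_of_pos hu).trans (by linarith)
    have habs : |Real.log u| ≤ 2 * u ^ (1 / 2 - 1 : ℝ) + u := by
      have := Real.rpow_nonneg hu.le (1 / 2 - 1 : ℝ)
      rw [abs_le]
      constructor <;> linarith
    have hpow : u ^ (2 - 1 : ℝ) = u := by norm_num
    simp only [Pi.add_apply, hpow, Real.norm_eq_abs, abs_mul, Real.abs_exp]
    nlinarith [Real.exp_pos (-u)]
  have h_scaled : IntegrableOn
      (fun u : ℝ => Real.log (s * u) * Real.exp (-(s * u))) (Ioi 0) := by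
    rw [integrableOn_Ioi_comp_mul_left_iff (fun v => Real.log v * Real.exp (-v)) 0 hs, mul_zero]
    exact h_one
  have h_exp : IntegrableOn (fun u : ℝ => Real.exp (-s * u)) (Ioi 0) :=
    integrableOn_exp_mul_Ioi (neg_neg_of_pos hs) 0
  refine (h_scaled.sub (h_exp.const_mul (Real.log s))).congr_fun (fun u hu => ?_) measurableSet_Ioi
  simp only [Pi.sub_apply]
  rw [Real.log_mul hs.ne' (ne_of_gt hu), neg_mul]
  ring

open MeasureTheory Set in
theorem mul_integral_exp_neg_mul {s : ℝ} (hs : 0 < s) :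
    s * ∫ u in Ioi (0 : ℝ), Real.exp (-(s * u)) = 1 := by
  have := integral_exp_mul_Ioi (neg_neg_of_pos hs) 0
  simp only [neg_mul] at this
  rw [this]
  simp [hs.ne']

open MeasureTheory Set in
theorem mul_integral_log_mul_exp_neg_mul {s : ℝ} (hs : 0 < s) :
    s * ∫ u in Ioi (0 : ℝ), Real.log u * Real.exp (-(s * u)) =
      (∫ v in Ioi (0 : ℝ), Real.log v * Real.exp (-v)) - Real.log s := by
  have h_scale := integral_comp_mul_left_Ioi (fun v => Real.log v * Real.exp (-v)) 0 hs
  have h_exp : IntegrableOn (fun u : ℝ => Real.exp (-(s * u))) (Ioi 0) := by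
    simpa only [neg_mul] using integrableOn_exp_mul_Ioi (neg_neg_of_pos hs) 0
  have h_split : ∫ u in Ioi (0 : ℝ), Real.log (s * u) * Real.exp (-(s * u)) =
      Real.log s * (∫ u in Ioi (0 : ℝ), Real.exp (-(s * u))) +
        ∫ u in Ioi (0 : ℝ), Real.log u * Real.exp (-(s * u)) := by
    rw [← integral_const_mul, ← integral_add (h_exp.const_mul _)
      (integrableOn_log_mul_exp_neg_mul hs)]
    refine setIntegral_congr_fun measurableSet_Ioi fun u hu => ?_
    rw [Real.log_mul hs.ne' (ne_of_gt hu)]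
    ring
  rw [mul_zero, smul_eq_mul] at h_scale
  have h_mass := mul_integral_exp_neg_mul hs
  have h_cancel : s * (s⁻¹ * ∫ v in Ioi (0 : ℝ), Real.log v * Real.exp (-v)) =
      ∫ v in Ioi (0 : ℝ), Real.log v * Real.exp (-v) := by
    rw [← mul_assoc, mul_inv_cancel₀ hs.ne', one_mul]
  rw [← h_cancel, ← h_scale, h_split]
  linear_combination (-Real.log s) * h_mass

open MeasureTheory Set in
theorem integrableOn_mul_exp_neg_mul_of_norm_le_div {E : ℝ → ℂ} (hE : Measurable E) {A L : ℝ}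
    (hL : 0 < L) (hint : IntegrableOn E (Ioc 0 L)) (hbound : ∀ u, L ≤ u → ‖E u‖ ≤ A / u)
    {s : ℝ} (hs : 0 < s) :
    IntegrableOn (fun u : ℝ => E u * (Real.exp (-(s * u)) : ℂ)) (Ioi 0) := by
  have hA : 0 ≤ A := by
    have := (norm_nonneg _).trans (hbound L le_rfl)
    by_contra! h
    exact absurd (div_neg_of_neg_of_pos h hL) this.not_gt
  rw [← Ioc_union_Ioi_eq_Ioi hL.le]
  refine IntegrableOn.union ?_ ?_
  · refine Integrable.mono hint (by fun_prop) ?_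
    filter_upwards [ae_restrict_mem measurableSet_Ioc] with u hu
    rw [norm_mul, Complex.norm_real, Real.norm_eq_abs, Real.abs_exp]
    refine mul_le_of_le_one_right (norm_nonneg _) (Real.exp_le_one_iff.2 ?_)
    nlinarith [hu.1]
  · refine Integrable.mono' ((integrableOn_exp_mul_Ioi (neg_neg_of_pos hs) L).const_mul (A / L))
      (by fun_prop) ?_
    filter_upwards [ae_restrict_mem measurableSet_Ioi] with u hu
    have hu : L < u := hu
    rw [norm_mul, Complex.norm_real, Real.norm_eq_abs, Real.abs_exp, neg_mul]
    gcongr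
    exact (hbound u hu.le).trans (by gcongr)

open MeasureTheory Set in
theorem norm_integral_mul_exp_neg_mul_le {E : ℝ → ℂ} (hE : Measurable E) {A L : ℝ}
    (hL : 1 ≤ L) (hint : IntegrableOn E (Ioc 0 L)) (hbound : ∀ u, L ≤ u → ‖E u‖ ≤ A / u)
    {s : ℝ} (hs : 0 < s) (hs1 : s ≤ 1) :
    ‖∫ u in Ioi (0 : ℝ), E u * (Real.exp (-(s * u)) : ℂ)‖ ≤
      (∫ u in Ioc 0 L, ‖E u‖) + A * (Real.log (1 / s) + 1) := by
  have hL0 : 0 < L := by linarith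
  have hA : 0 ≤ A := by
    have := (norm_nonneg _).trans (hbound L le_rfl)
    by_contra! h
    exact absurd (div_neg_of_neg_of_pos h hL0) this.not_gt
  have hLs : L ≤ L / s := by rw [le_div_iff₀ hs]; nlinarith
  have h_all := integrableOn_mul_exp_neg_mul_of_norm_le_div hE hL0 hint hbound hs
  have h_near : ‖∫ u in Ioc 0 L, E u * (Real.exp (-(s * u)) : ℂ)‖ ≤ ∫ u in Ioc 0 L, ‖E u‖ := by
    refine norm_integral_le_of_norm_le hint.norm ?_
    filter_upwards [ae_restrict_mem measurableSet_Ioc] with u hu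
    rw [norm_mul, Complex.norm_real, Real.norm_eq_abs, Real.abs_exp]
    refine mul_le_of_le_one_right (norm_nonneg _) (Real.exp_le_one_iff.2 ?_)
    nlinarith [hu.1]
  have h_mid : ‖∫ u in Ioc L (L / s), E u * (Real.exp (-(s * u)) : ℂ)‖ ≤
      A * Real.log (1 / s) := by
    have h_eq : ∫ u in Ioc L (L / s), A * (1 / u) = A * Real.log (1 / s) := by
      rw [integral_const_mul, ← intervalIntegral.integral_of_le hLs,
        integral_one_div_of_pos hL0 (by positivity)]
      congr 2
      field_simp
    rw [← h_eq]
    have h_inv : IntegrableOn (fun u : ℝ => 1 / u) (Ioc L (L / s)) := by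
      rw [← intervalIntegrable_iff_integrableOn_Ioc_of_le hLs]
      refine intervalIntegral.intervalIntegrable_one_div (fun x hx => ?_) continuousOn_id
      rw [uIcc_of_le hLs] at hx
      exact (hL0.trans_le hx.1).ne'
    refine norm_integral_le_of_norm_le (h_inv.const_mul A) ?_
    filter_upwards [ae_restrict_mem measurableSet_Ioc] with u hu
    rw [norm_mul, Complex.norm_real, Real.norm_eq_abs, Real.abs_exp, mul_one_div]
    refine (mul_le_of_le_one_right (norm_nonneg _) (Real.exp_le_one_iff.2 ?_)).trans
      (hbound u hu.1.le)
    nlinarith [hu.1]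
  have h_far : ‖∫ u in Ioi (L / s), E u * (Real.exp (-(s * u)) : ℂ)‖ ≤ A := by
    have h_int := integrableOn_exp_mul_Ioi (neg_neg_of_pos hs) (L / s)
    have h_le : ∫ u in Ioi (L / s), A * s * Real.exp (-s * u) ≤ A := by
      rw [integral_const_mul, integral_exp_mul_Ioi (neg_neg_of_pos hs), neg_div_neg_eq,
        mul_assoc, mul_div_cancel₀ _ hs.ne']
      refine mul_le_of_le_one_right hA (Real.exp_le_one_iff.2 ?_)
      have : 0 ≤ s * (L / s) := by positivity
      linarith
    refine (norm_integral_le_of_norm_le (h_int.const_mul (A * s)) ?_).trans h_le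
    filter_upwards [ae_restrict_mem measurableSet_Ioi] with u hu
    have hu : L / s < u := hu
    have hsu : L < u * s := (div_lt_iff₀ hs).1 hu
    have hu0 : 0 < u := by linarith
    rw [norm_mul, Complex.norm_real, Real.norm_eq_abs, Real.abs_exp, neg_mul]
    gcongr
    refine (hbound u (by linarith)).trans ?_
    rw [div_le_iff₀ hu0]
    nlinarith
  rw [← Ioc_union_Ioi_eq_Ioi hL0.le] at h_all ⊢
  rw [← Ioc_union_Ioi_eq_Ioi hLs] at h_all ⊢
  rw [integrableOn_union, integrableOn_union] at h_all
  obtain ⟨h1, h2, h3⟩ := h_all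
  rw [setIntegral_union _ (measurableSet_Ioc.union measurableSet_Ioi) h1 (h2.union h3),
    setIntegral_union (Ioc_disjoint_Ioi le_rfl) measurableSet_Ioi h2 h3]
  · refine (norm_add_le _ _).trans ?_
    have := norm_add_le (∫ u in Ioc L (L / s), E u * (Real.exp (-(s * u)) : ℂ))
      (∫ u in Ioi (L / s), E u * (Real.exp (-(s * u)) : ℂ))
    linarith
  · rw [Ioc_union_Ioi_eq_Ioi hLs]
    exact Ioc_disjoint_Ioi le_rfl

open MeasureTheory Set in
theorem LSeries_eq_mul_integral_exp (f : ℕ → ℂ) {r s : ℝ} (hr : 0 ≤ r) (hrs : r < s)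
    (hO : (fun n ↦ ∑ k ∈ Finset.Icc 1 n, ‖f k‖) =O[Filter.atTop] fun n : ℕ ↦ (n : ℝ) ^ r) :
    LSeries f s = s * ∫ u in Ioi (0 : ℝ),
      (∑ k ∈ Finset.Icc 1 ⌊Real.exp u⌋₊, f k) * (Real.exp (-(s * u)) : ℂ) := by
  rw [LSeries_eq_mul_integral' f hr (s := (s : ℂ)) (by simpa using hrs) hO]
  congr 1
  have h_image : Real.exp '' Set.Ioi 0 = Set.Ioi 1 := by
    ext x
    constructor
    · rintro ⟨u, hu, rfl⟩
      exact Real.one_lt_exp_iff.2 hu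
    · intro hx
      exact ⟨Real.log x, Real.log_pos hx, Real.exp_log (zero_lt_one.trans hx)⟩
  rw [← h_image, integral_image_eq_integral_abs_deriv_smul measurableSet_Ioi
    (fun u _ => (Real.hasDerivAt_exp u).hasDerivWithinAt) Real.exp_injective.injOn]
  refine setIntegral_congr_fun measurableSet_Ioi fun u _ => ?_
  simp only [Real.abs_exp, Complex.real_smul]
  rw [mul_left_comm]
  congr 1
  have : -((s : ℂ) + 1) = ((-(s + 1) : ℝ) : ℂ) := by push_cast; ring
  rw [this, ← Complex.ofReal_cpow (Real.exp_pos u).le, ← Real.exp_mul, ← Complex.ofReal_mul,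
    ← Real.exp_add]
  congr 2
  ring

open MeasureTheory Set in
/-- An Abelian theorem: if the summatory function of `f` is `κ log log x + c + O(1 / log x)`, then
its Dirichlet series is `-κ log s + c' + O(s log (1 / s))` as `s → 0⁺`. -/
theorem exists_norm_LSeries_add_log_sub_le (f : ℕ → ℂ) (κ : ℝ) (c : ℂ) (A : ℝ)
    (hO : ∀ r : ℝ, 0 < r →
      (fun n ↦ ∑ k ∈ Finset.Icc 1 n, ‖f k‖) =O[Filter.atTop] fun n : ℕ ↦ (n : ℝ) ^ r)
    (hf : ∀ x : ℝ, 3 ≤ x → ‖∑ k ∈ Finset.Icc 1 ⌊x⌋₊, f k -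
      (((κ * Real.log (Real.log x) : ℝ) : ℂ) + c)‖ ≤ A / Real.log x) :
    ∃ c' : ℂ, ∃ K : ℝ, 0 ≤ K ∧ ∀ s : ℝ, 0 < s → s ≤ 1 →
      ‖LSeries f s + ((κ * Real.log s : ℝ) : ℂ) - c'‖ ≤ s * (K + A * (Real.log (1 / s) + 1)) := by
  set S : ℝ → ℂ := fun u => ∑ k ∈ Finset.Icc 1 ⌊Real.exp u⌋₊, f k with hS
  set M : ℝ → ℂ := fun u => ((κ * Real.log u : ℝ) : ℂ) + c with hM
  set L := Real.log 3 with hL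
  have hL1 : 1 ≤ L := by
    rw [hL, Real.le_log_iff_exp_le (by norm_num)]
    linarith [Real.exp_one_lt_d9]
  have hS_meas : Measurable S :=
    (measurable_from_nat (f := fun n => ∑ k ∈ Finset.Icc 1 n, f k)).comp
      (Nat.measurable_floor.comp Real.measurable_exp)
  have hM_meas : Measurable M := by fun_prop
  have hE_meas : Measurable (fun u => S u - M u) := hS_meas.sub hM_meas
  have hE_bound : ∀ u, L ≤ u → ‖S u - M u‖ ≤ A / u := fun u hu => by
    simpa [hS, hM] using hf (Real.exp u) ((Real.log_le_iff_le_exp (by norm_num)).1 hu)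
  have hE_int : IntegrableOn (fun u => S u - M u) (Ioc 0 L) := by
    refine Integrable.sub ?_ ?_
    · refine Measure.integrableOn_of_bounded (M := ∑ k ∈ Finset.Icc 1 3, ‖f k‖) (by simp)
        hS_meas.aestronglyMeasurable ?_
      filter_upwards [ae_restrict_mem measurableSet_Ioc] with u hu
      refine (norm_sum_le _ _).trans (Finset.sum_le_sum_of_subset_of_nonneg
        (Finset.Icc_subset_Icc_right ?_) fun _ _ _ => norm_nonneg _)
      have : Real.exp u ≤ 3 := (Real.le_log_iff_exp_le (by norm_num)).1 hu.2
      exact Nat.floor_le_of_le (by exact_mod_cast this)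
    · refine Integrable.add (Integrable.ofReal (Integrable.const_mul ?_ κ)) ?_
      · exact (intervalIntegrable_iff_integrableOn_Ioc_of_le (by linarith)).1
          intervalIntegral.intervalIntegrable_log'
      · exact integrable_const c
  set G := ∫ v in Ioi (0 : ℝ), Real.log v * Real.exp (-v)
  refine ⟨((κ * G : ℝ) : ℂ) + c, ∫ u in Ioc 0 L, ‖S u - M u‖,
    integral_nonneg fun _ => norm_nonneg _, fun s hs hs1 => ?_⟩
  have hE_exp := integrableOn_mul_exp_neg_mul_of_norm_le_div hE_meas (by linarith) hE_int
    hE_bound hs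
  have h_exp : IntegrableOn (fun u : ℝ => Real.exp (-(s * u))) (Ioi 0) := by
    simpa only [neg_mul] using integrableOn_exp_mul_Ioi (neg_neg_of_pos hs) 0
  have h_log : IntegrableOn
      (fun u : ℝ => ((κ * (Real.log u * Real.exp (-(s * u))) : ℝ) : ℂ)) (Ioi 0) :=
    ((integrableOn_log_mul_exp_neg_mul hs).const_mul κ).ofReal
  have h_const : IntegrableOn (fun u : ℝ => c * (Real.exp (-(s * u)) : ℂ)) (Ioi 0) :=
    h_exp.ofReal.const_mul c
  have h_series := LSeries_eq_mul_integral_exp f (half_pos hs).le (half_lt_self hs)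
    (hO _ (half_pos hs))
  have h_split : ∫ u in Ioi (0 : ℝ), S u * (Real.exp (-(s * u)) : ℂ) =
      (∫ u in Ioi (0 : ℝ), (S u - M u) * (Real.exp (-(s * u)) : ℂ)) +
      (((κ * ∫ u in Ioi (0 : ℝ), Real.log u * Real.exp (-(s * u)) : ℝ) : ℂ) +
        c * ((∫ u in Ioi (0 : ℝ), Real.exp (-(s * u)) : ℝ) : ℂ)) := by
    rw [← integral_const_mul, ← integral_complex_ofReal, ← integral_complex_ofReal,
      ← integral_const_mul, ← integral_add h_log h_const,
      ← integral_add hE_exp (h_log.fun_add h_const)]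
    refine integral_congr_ae (Filter.Eventually.of_forall fun u => ?_)
    simp only [hM]
    push_cast
    ring
  have h_mass : (s : ℂ) * ((∫ u in Ioi (0 : ℝ), Real.exp (-(s * u)) : ℝ) : ℂ) = 1 := by
    exact_mod_cast mul_integral_exp_neg_mul hs
  have h_logmass : (s : ℂ) * ((∫ u in Ioi (0 : ℝ), Real.log u * Real.exp (-(s * u)) : ℝ) : ℂ) =
      (G : ℂ) - (Real.log s : ℂ) := by
    exact_mod_cast mul_integral_log_mul_exp_neg_mul hs
  have h_eq : LSeries f s + ((κ * Real.log s : ℝ) : ℂ) - (((κ * G : ℝ) : ℂ) + c) =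
      s * ∫ u in Ioi (0 : ℝ), (S u - M u) * (Real.exp (-(s * u)) : ℂ) := by
    rw [h_series, h_split]
    rw [Complex.ofReal_mul, Complex.ofReal_mul, Complex.ofReal_mul]
    linear_combination c * h_mass + κ * h_logmass
  rw [h_eq, norm_mul, Complex.norm_real, Real.norm_eq_abs, abs_of_pos hs]
  gcongr
  exact norm_integral_mul_exp_neg_mul_le hE_meas hL1 hE_int hE_bound hs hs1

theorem sum_Icc_one_ite_prime {E : Type*} [AddCommMonoid E] (g : ℕ → E) (m : ℕ) :
    ∑ k ∈ Finset.Icc 1 m, (if k.Prime then g k else 0) =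
      ∑ p ∈ (Finset.range (m + 1)).filter Nat.Prime, g p := by
  rw [← Finset.sum_filter]
  congr 1
  ext k
  simp only [Finset.mem_filter, Finset.mem_Icc, Finset.mem_range, Order.lt_add_one_iff,
    and_congr_left_iff, and_iff_right_iff_imp]
  exact fun hk _ => hk.one_le

theorem isBigO_rpow_of_le_log_log {T : ℕ → ℝ} {a b : ℝ} (ha : 0 ≤ a) (hb : 0 ≤ b)
    (hT : ∀ n, 0 ≤ T n) (hle : ∀ n : ℕ, 3 ≤ n → T n ≤ a * Real.log (Real.log n) + b)
    {r : ℝ} (hr : 0 < r) : T =O[Filter.atTop] fun n : ℕ ↦ (n : ℝ) ^ r := by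
  refine Asymptotics.IsBigO.of_bound (a / r + b) ?_
  filter_upwards [Filter.eventually_ge_atTop 3] with n hn
  have hn' : (3 : ℝ) ≤ n := by exact_mod_cast hn
  have h_one : 1 ≤ (n : ℝ) ^ r := Real.one_le_rpow (by linarith) hr.le
  have h_log : Real.log (Real.log n) ≤ (n : ℝ) ^ r / r :=
    (Real.log_le_self (Real.log_nonneg (by linarith))).trans
      (Real.log_le_rpow_div (by linarith) hr)
  rw [Real.norm_of_nonneg (hT n), Real.norm_of_nonneg (by linarith)]
  calc T n ≤ a * Real.log (Real.log n) + b := hle n hn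
    _ ≤ a * ((n : ℝ) ^ r / r) + b * (n : ℝ) ^ r := by gcongr; nlinarith
    _ = (a / r + b) * (n : ℝ) ^ r := by ring

theorem sum_Icc_norm_prime_mul_conj_div_le (β1 β2 : ℕ → ℂ) (m : ℕ) :
    ∑ k ∈ Finset.Icc 1 m, ‖if k.Prime then β1 k * conj (β2 k) / (k : ℂ) else 0‖ ≤
      ((∑ p ∈ (Finset.range (m + 1)).filter Nat.Prime, ‖β1 p‖ ^ 2 / (p : ℝ)) +
        ∑ p ∈ (Finset.range (m + 1)).filter Nat.Prime, ‖β2 p‖ ^ 2 / (p : ℝ)) / 2 := by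
  simp only [apply_ite norm, norm_zero]
  rw [sum_Icc_one_ite_prime (fun k => ‖β1 k * conj (β2 k) / (k : ℂ)‖), ← Finset.sum_add_distrib,
    Finset.sum_div]
  refine Finset.sum_le_sum fun p _ => ?_
  rw [norm_div, norm_mul, RCLike.norm_conj, Complex.norm_natCast, ← add_div, div_right_comm]
  gcongr
  nlinarith [sq_nonneg (‖β1 p‖ - ‖β2 p‖)]

theorem indicator_prime_div_rpow_eq_term (g : ℕ → ℂ) (σ : ℝ) :
    {p : ℕ | p.Prime}.indicator (fun p => g p / ((((p : ℝ) ^ (2 * σ) : ℝ)) : ℂ)) =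
      LSeries.term (fun k => if k.Prime then g k / (k : ℂ) else 0) ((2 * σ - 1 : ℝ) : ℂ) := by
  ext n
  rw [LSeries.term_def]
  by_cases hn : n.Prime
  · have hn0 : (0 : ℝ) < n := by exact_mod_cast hn.pos
    rw [Set.indicator_of_mem (by exact hn), if_neg hn.ne_zero, if_pos hn, div_div,
      ← Complex.ofReal_natCast, ← Complex.ofReal_cpow hn0.le, ← Complex.ofReal_mul]
    congr 2
    rw [Real.rpow_sub hn0, Real.rpow_one]
    field_simp
  · rw [Set.indicator_of_notMem (by exact hn)]
    simp [hn]

theorem summable_primes_div_rpow_iff (g : ℕ → ℂ) (σ : ℝ) :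
    Summable (fun p : Nat.Primes => g p / (((((p : ℕ) : ℝ) ^ (2 * σ) : ℝ)) : ℂ)) ↔
      LSeriesSummable (fun k => if k.Prime then g k / (k : ℂ) else 0) ((2 * σ - 1 : ℝ) : ℂ) := by
  rw [LSeriesSummable, ← indicator_prime_div_rpow_eq_term]
  exact summable_subtype_iff_indicator (s := {p : ℕ | p.Prime})
    (f := fun p : ℕ => g p / ((((p : ℝ) ^ (2 * σ) : ℝ)) : ℂ))

theorem tsum_primes_div_rpow_eq_LSeries (g : ℕ → ℂ) (σ : ℝ) :
    ∑' p : Nat.Primes, g p / (((((p : ℕ) : ℝ) ^ (2 * σ) : ℝ)) : ℂ) =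
      LSeries (fun k => if k.Prime then g k / (k : ℂ) else 0) ((2 * σ - 1 : ℝ) : ℂ) := by
  rw [LSeries, ← indicator_prime_div_rpow_eq_term]
  exact _root_.tsum_subtype {p : ℕ | p.Prime}
    (fun p : ℕ => g p / ((((p : ℝ) ^ (2 * σ) : ℝ)) : ℂ))

theorem mul_add_log_one_div_le {K A σ : ℝ} (hK : 0 ≤ K) (hA : 0 ≤ A) (hσ : 1 / 2 < σ)
    (hσ1 : σ ≤ 1) :
    (2 * σ - 1) * (K + A * (Real.log (1 / (2 * σ - 1)) + 1)) ≤
      2 * (2 * (K + A) + A) * (σ - 1 / 2) * Real.log (1 / (σ - 1 / 2)) := by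
  have hσ0 : 0 < σ - 1 / 2 := by linarith
  have h_le : Real.log (1 / (2 * σ - 1)) ≤ Real.log (1 / (σ - 1 / 2)) := by
    refine Real.log_le_log (one_div_pos.2 (by linarith)) (one_div_le_one_div_of_le hσ0 ?_)
    linarith
  have h_half : 1 / 2 ≤ Real.log (1 / (σ - 1 / 2)) := by
    have : Real.log 2 ≤ Real.log (1 / (σ - 1 / 2)) := by
      refine Real.log_le_log two_pos ?_
      rw [le_div_iff₀ hσ0]
      linarith
    linarith [Real.log_two_gt_d9]
  have h_mul : (K + A) * (1 / 2) ≤ (K + A) * Real.log (1 / (σ - 1 / 2)) := by gcongr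
  have h_mul' : A * Real.log (1 / (2 * σ - 1)) ≤ A * Real.log (1 / (σ - 1 / 2)) := by gcongr
  calc (2 * σ - 1) * (K + A * (Real.log (1 / (2 * σ - 1)) + 1)) ≤
      (2 * σ - 1) * ((2 * (K + A) + A) * Real.log (1 / (σ - 1 / 2))) :=
        mul_le_mul_of_nonneg_left (by linarith) (by linarith)
    _ = _ := by ring

/-- Under the Selberg-orthonormality-type hypotheses on `β1, β2`, there exist a complex
constant `c'` and `C > 0` such that for `1/2 < σ ≤ 1` the series
`∑_p β1(p) conj(β2(p)) / p^{2σ}` converges absolutely and equals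
`δ ξ log(1/(σ−1/2)) + c' + O((σ−1/2) log(1/(σ−1/2)))`. -/
theorem stmt_3 (β1 β2 : ℕ → ℂ) (ξ ξ1 ξ2 : ℝ) (hξ : 0 ≤ ξ) (hξ1 : 0 ≤ ξ1) (hξ2 : 0 ≤ ξ2)
    (δ : ℝ) (hδ : δ = 0 ∨ δ = 1) (c : ℂ) (A : ℝ) (hA : 0 < A)
    (h12 : ∀ x : ℝ, 3 ≤ x →
      ‖(∑ p ∈ (Finset.range (⌊x⌋₊ + 1)).filter Nat.Prime,
            β1 p * conj (β2 p) / (p : ℂ)) -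
          (((δ * ξ * Real.log (Real.log x) : ℝ) : ℂ) + c)‖ ≤ A / Real.log x)
    (h1 : ∀ x : ℝ, 3 ≤ x →
      |(∑ p ∈ (Finset.range (⌊x⌋₊ + 1)).filter Nat.Prime, ‖β1 p‖ ^ 2 / (p : ℝ)) -
          ξ1 * Real.log (Real.log x)| ≤ A)
    (h2 : ∀ x : ℝ, 3 ≤ x →
      |(∑ p ∈ (Finset.range (⌊x⌋₊ + 1)).filter Nat.Prime, ‖β2 p‖ ^ 2 / (p : ℝ)) -
          ξ2 * Real.log (Real.log x)| ≤ A) :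
    ∃ c' : ℂ, ∃ C : ℝ, 0 < C ∧ ∀ σ : ℝ, 1 / 2 < σ → σ ≤ 1 →
      Summable (fun p : Nat.Primes =>
        ‖β1 (p : ℕ) * conj (β2 (p : ℕ)) / (((((p : ℕ) : ℝ) ^ (2 * σ) : ℝ)) : ℂ)‖) ∧
      ‖(∑' p : Nat.Primes,
            β1 (p : ℕ) * conj (β2 (p : ℕ)) / (((((p : ℕ) : ℝ) ^ (2 * σ) : ℝ)) : ℂ)) -
          ((δ * ξ * Real.log (1 / (σ - 1 / 2)) : ℝ) : ℂ) - c'‖ ≤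
        C * (σ - 1 / 2) * Real.log (1 / (σ - 1 / 2)) := by
  set f : ℕ → ℂ := fun k => if k.Prime then β1 k * conj (β2 k) / (k : ℂ) else 0 with hf
  have hO : ∀ r : ℝ, 0 < r →
      (fun n ↦ ∑ k ∈ Finset.Icc 1 n, ‖f k‖) =O[Filter.atTop] fun n : ℕ ↦ (n : ℝ) ^ r := by
    refine fun r hr => isBigO_rpow_of_le_log_log (a := (ξ1 + ξ2) / 2) (by positivity) hA.le
      (fun n => Finset.sum_nonneg fun _ _ => norm_nonneg _) (fun n hn => ?_) hr
    have hn' : (3 : ℝ) ≤ n := by exact_mod_cast hn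
    have b1 := (abs_le.1 (h1 n hn')).2
    have b2 := (abs_le.1 (h2 n hn')).2
    rw [Nat.floor_natCast] at b1 b2
    have := sum_Icc_norm_prime_mul_conj_div_le β1 β2 n
    simp only [hf]
    linarith
  obtain ⟨c', K, hK, hmain⟩ := exists_norm_LSeries_add_log_sub_le f (δ * ξ) c A hO
    fun x hx => by rw [sum_Icc_one_ite_prime]; exact h12 x hx
  refine ⟨c' - ((δ * ξ * Real.log 2 : ℝ) : ℂ), 2 * (2 * (K + A) + A), by positivity,
    fun σ hσ hσ1 => ?_⟩
  have hs : 0 < 2 * σ - 1 := by linarith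
  have h_summable : LSeriesSummable f ((2 * σ - 1 : ℝ) : ℂ) :=
    LSeriesSummable_of_sum_norm_bigO (hO _ (half_pos hs)) (half_pos hs).le
      (by rw [Complex.ofReal_re]; exact half_lt_self hs)
  refine ⟨((summable_primes_div_rpow_iff (fun p => β1 p * conj (β2 p)) σ).2 h_summable).norm, ?_⟩
  rw [tsum_primes_div_rpow_eq_LSeries (fun p => β1 p * conj (β2 p)) σ, ← hf]
  have h_log : Real.log (1 / (σ - 1 / 2)) = Real.log 2 - Real.log (2 * σ - 1) := by
    rw [← Real.log_div two_ne_zero hs.ne', show 2 * σ - 1 = 2 * (σ - 1 / 2) by ring,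
      ← div_div, div_self two_ne_zero]
  refine le_trans (le_of_eq ?_) ((hmain (2 * σ - 1) hs (by linarith)).trans
    (mul_add_log_one_div_le hK hA.le hσ hσ1))
  rw [h_log, mul_sub (δ * ξ), Complex.ofReal_sub (δ * ξ * Real.log 2)]
  congr 1
  abel
end

section
/- There exists a constant C > 0 such that for every real σ with 1/2 < σ ≤ 1 and every real Y with 2 ≤ Y ≤ exp(1/(2σ − 1)), the series ∑_{p > Y} β1(p)·conj(β2(p))/p^{2σ} over primes p > Y converges absolutely and | ∑_{p > Y} β1(p)·conj(β2(p))/p^{2σ} − δξ log( 1/((σ − 1/2) log Y) ) | ≤ C. -/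
open Finset ComplexConjugate

/-- The primes up to the real number `x`. -/
noncomputable abbrev primesUpTo (x : ℝ) : Finset ℕ := (Finset.range (⌊x⌋₊ + 1)).filter Nat.Prime

lemma mem_primesUpTo {x : ℝ} (hx : 0 ≤ x) {p : ℕ} :
    p ∈ primesUpTo x ↔ (p : ℝ) ≤ x ∧ p.Prime := by
  rw [Finset.mem_filter, Finset.mem_range, Nat.lt_succ_iff, Nat.le_floor_iff hx]

lemma one_le_log_of_three_le {x : ℝ} (hx : 3 ≤ x) : 1 ≤ Real.log x := by
  rw [Real.le_log_iff_exp_le (by linarith)]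
  linarith [Real.exp_one_lt_d9]

/-- If the partial sums of `g ≥ 0` over primes are `ξ log log x + O(1)`, then the sum of `g` over
primes `p` with `T ≤ log p ≤ e T` is bounded uniformly in `T`. -/
lemma exists_sum_le_of_log_mem_Icc {g : ℕ → ℝ} (hg : ∀ p, 0 ≤ g p) {ξ A : ℝ}
    (h : ∀ x : ℝ, 3 ≤ x →
      |(∑ p ∈ primesUpTo x, g p) - ξ * Real.log (Real.log x)| ≤ A) :
    ∃ M : ℝ, 0 ≤ M ∧ ∀ T : ℝ, 0 < T → ∀ F : Finset ℕ,
      (∀ p ∈ F, p.Prime ∧ T ≤ Real.log p ∧ Real.log p ≤ Real.exp 1 * T) →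
      ∑ p ∈ F, g p ≤ M := by
  set K : ℝ := Real.exp (Real.exp 1 * (Real.exp 1 * Real.log 3))
  have hK0 : 0 ≤ ∑ p ∈ primesUpTo K, g p := Finset.sum_nonneg fun p _ => hg p
  refine ⟨max (∑ p ∈ primesUpTo K, g p) (2 * ξ + 2 * A), le_max_of_le_left hK0, ?_⟩
  intro T hT F hF
  have hple : ∀ p ∈ F, (p : ℝ) ≤ Real.exp (Real.exp 1 * T) := fun p hp => by
    obtain ⟨hpp, -, h2⟩ := hF p hp
    rwa [← Real.log_le_iff_le_exp (by exact_mod_cast hpp.pos)]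
  rcases le_total T (Real.exp 1 * Real.log 3) with hT3 | hT3
  · refine le_max_of_le_left (Finset.sum_le_sum_of_subset_of_nonneg ?_ fun p _ _ => hg p)
    intro p hp
    refine (mem_primesUpTo (Real.exp_pos _).le).2 ⟨(hple p hp).trans ?_, (hF p hp).1⟩
    exact Real.exp_le_exp.2 (by gcongr)
  · refine le_max_of_le_right ?_
    have he : (1 : ℝ) < Real.exp 1 := by simp
    set x : ℝ := Real.exp (T / Real.exp 1)
    set z : ℝ := Real.exp (Real.exp 1 * T)
    have hx3 : 3 ≤ x := by
      rw [← Real.log_le_iff_le_exp (by norm_num), le_div_iff₀ (Real.exp_pos _)]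
      linarith
    have hxT : T / Real.exp 1 < T := div_lt_self hT he
    have hTz : T < Real.exp 1 * T := by nlinarith
    have hxz : x ≤ z := Real.exp_le_exp.2 (by linarith)
    have hsub : primesUpTo x ⊆ primesUpTo z := fun p hp => by
      rw [mem_primesUpTo (Real.exp_pos _).le] at hp ⊢
      exact ⟨hp.1.trans hxz, hp.2⟩
    have hFsub : F ⊆ primesUpTo z \ primesUpTo x := fun p hp => by
      rw [Finset.mem_sdiff, mem_primesUpTo (Real.exp_pos _).le,
        mem_primesUpTo (Real.exp_pos _).le]
      refine ⟨⟨hple p hp, (hF p hp).1⟩, fun hpx => ?_⟩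
      have := (Real.log_le_iff_le_exp (by exact_mod_cast hpx.2.pos)).2 hpx.1
      linarith [(hF p hp).2.1]
    have hle := Finset.sum_le_sum_of_subset_of_nonneg hFsub fun p _ _ => hg p
    have hsd := Finset.sum_sdiff hsub (f := g)
    have hz := (abs_le.1 (h z (hx3.trans hxz))).2
    have hx := (abs_le.1 (h x hx3)).1
    have hlz : Real.log (Real.log z) = 1 + Real.log T := by
      rw [Real.log_exp, Real.log_mul (Real.exp_pos _).ne' hT.ne', Real.log_exp]
    have hlx : Real.log (Real.log x) = Real.log T - 1 := by
      rw [Real.log_exp, Real.log_div hT.ne' (Real.exp_pos _).ne', Real.log_exp]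
    rw [hlz] at hz
    rw [hlx] at hx
    linarith

lemma summable_exp_neg_abs_int : Summable fun k : ℤ => Real.exp (-|(k : ℝ)|) := by
  refine Summable.of_nat_of_neg ?_ ?_ <;>
  · simp only [Int.cast_natCast, Int.cast_neg, abs_neg, Nat.abs_cast]
    exact Real.summable_exp_neg_nat

lemma min_inv_le_exp_neg_abs_floor {u : ℝ} (hu : 0 < u) :
    min u u⁻¹ ≤ Real.exp 1 * Real.exp (-|(⌊Real.log u⌋ : ℝ)|) := by
  rw [← Real.exp_add]
  have h1 := Int.floor_le (Real.log u)
  have h2 := Int.lt_floor_add_one (Real.log u)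
  rcases abs_cases (⌊Real.log u⌋ : ℝ) with ⟨h, -⟩ | ⟨h, -⟩
  · refine (min_le_right _ _).trans ?_
    rw [← Real.exp_log (inv_pos.2 hu), Real.log_inv, Real.exp_le_exp, h]
    linarith
  · refine (min_le_left _ _).trans ?_
    nth_rw 1 [← Real.exp_log hu]
    rw [Real.exp_le_exp, h]
    linarith

/-- If the partial sums of `g ≥ 0` over primes are `ξ log log x + O(1)`, then the sums of `g`
weighted by `min (s log p) (s log p)⁻¹` are bounded uniformly in `s`. -/
lemma exists_sum_mul_min_le {g : ℕ → ℝ} (hg : ∀ p, 0 ≤ g p) {ξ A : ℝ}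
    (h : ∀ x : ℝ, 3 ≤ x →
      |(∑ p ∈ primesUpTo x, g p) - ξ * Real.log (Real.log x)| ≤ A) :
    ∃ C : ℝ, 0 ≤ C ∧ ∀ s : ℝ, 0 < s → ∀ F : Finset ℕ, (∀ p ∈ F, p.Prime) →
      ∑ p ∈ F, g p * min (s * Real.log p) (s * Real.log p)⁻¹ ≤ C := by
  obtain ⟨M, hM, hfib⟩ := exists_sum_le_of_log_mem_Icc hg h
  refine ⟨Real.exp 1 * M * ∑' k : ℤ, Real.exp (-|(k : ℝ)|),
    mul_nonneg (by positivity) (tsum_nonneg fun k => (Real.exp_pos _).le), ?_⟩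
  intro s hs F hF
  have hu : ∀ p ∈ F, 0 < s * Real.log p := fun p hp =>
    mul_pos hs (Real.log_pos (by exact_mod_cast (hF p hp).one_lt))
  set κ : ℕ → ℤ := fun p => ⌊Real.log (s * Real.log p)⌋
  calc ∑ p ∈ F, g p * min (s * Real.log p) (s * Real.log p)⁻¹
      ≤ ∑ p ∈ F, g p * (Real.exp 1 * Real.exp (-|(κ p : ℝ)|)) :=
        Finset.sum_le_sum fun p hp =>
          mul_le_mul_of_nonneg_left (min_inv_le_exp_neg_abs_floor (hu p hp)) (hg p)
    _ = ∑ k ∈ F.image κ, ∑ p ∈ F with κ p = k,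
          g p * (Real.exp 1 * Real.exp (-|(κ p : ℝ)|)) :=
        (Finset.sum_fiberwise_of_maps_to (fun p hp => Finset.mem_image_of_mem κ hp) _).symm
    _ ≤ ∑ k ∈ F.image κ, Real.exp 1 * M * Real.exp (-|(k : ℝ)|) := by
        refine Finset.sum_le_sum fun k _ => ?_
        have hk : ∑ p ∈ F with κ p = k, g p ≤ M := by
          refine hfib (Real.exp k / s) (by positivity) _ fun p hp => ?_
          obtain ⟨hpF, hpk⟩ := Finset.mem_filter.1 hp
          have hfl := Int.floor_eq_iff.1 hpk
          rw [Real.le_log_iff_exp_le (hu p hpF)] at hfl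
          refine ⟨hF p hpF, (div_le_iff₀ hs).2 (by linarith [hfl.1]), ?_⟩
          have := ((Real.log_lt_iff_lt_exp (hu p hpF)).1 hfl.2).le
          rw [Real.exp_add] at this
          rw [← mul_div_assoc, le_div_iff₀ hs]
          linarith
        calc ∑ p ∈ F with κ p = k, g p * (Real.exp 1 * Real.exp (-|(κ p : ℝ)|))
            = (∑ p ∈ F with κ p = k, g p) * (Real.exp 1 * Real.exp (-|(k : ℝ)|)) := by
              rw [Finset.sum_mul]
              refine Finset.sum_congr rfl fun p hp => ?_
              rw [(Finset.mem_filter.1 hp).2]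
          _ ≤ M * (Real.exp 1 * Real.exp (-|(k : ℝ)|)) := by gcongr
          _ = _ := by ring
    _ = Real.exp 1 * M * ∑ k ∈ F.image κ, Real.exp (-|(k : ℝ)|) := by rw [Finset.mul_sum]
    _ ≤ _ := by
        refine mul_le_mul_of_nonneg_left ?_ (by positivity)
        exact summable_exp_neg_abs_int.sum_le_tsum _ fun k _ => (Real.exp_pos _).le

/-- An asymptotic `L log log x + c + O(1 / log x)` for `x ≥ 3` gives a bounded error on `x ≥ 2`. -/
lemma exists_norm_sum_sub_le {a : ℕ → ℂ} {L A : ℝ} {c : ℂ} (hA : 0 ≤ A)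
    (h : ∀ x : ℝ, 3 ≤ x →
      ‖(∑ p ∈ primesUpTo x, a p) - (((L * Real.log (Real.log x) : ℝ) : ℂ) + c)‖
        ≤ A / Real.log x) :
    ∃ B : ℝ, ∀ x : ℝ, 2 ≤ x →
      ‖(∑ p ∈ primesUpTo x, a p) - (((L * Real.log (Real.log x) : ℝ) : ℂ) + c)‖ ≤ B := by
  refine ⟨max A (‖∑ p ∈ primesUpTo 2, a p‖ + (|L| + ‖c‖)), fun x hx => ?_⟩
  rcases le_or_gt 3 x with hx3 | hx3
  · exact le_max_of_le_left ((h x hx3).trans (div_le_self hA (one_le_log_of_three_le hx3)))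
  · have hfl : primesUpTo x = primesUpTo 2 := by
      have h1 : ⌊x⌋₊ = 2 := (Nat.floor_eq_iff (by linarith)).2 ⟨by simpa, by norm_num; linarith⟩
      have h2 : ⌊(2 : ℝ)⌋₊ = 2 := Nat.floor_ofNat 2
      simp only [primesUpTo, h1, h2]
    have hlog2 : Real.log 2 ≤ Real.log x := Real.log_le_log (by norm_num) hx
    have hpos : 0 < Real.log x := by linarith [Real.log_two_gt_d9]
    have hll : |Real.log (Real.log x)| ≤ 1 := by
      rw [abs_le]
      constructor
      · rw [Real.le_log_iff_exp_le hpos, Real.exp_neg]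
        refine le_trans ?_ hlog2
        rw [inv_le_comm₀ (Real.exp_pos _) (by linarith [Real.log_two_gt_d9])]
        refine le_trans ?_ (Real.exp_one_gt_d9.le)
        rw [inv_le_comm₀ (by linarith [Real.log_two_gt_d9]) (by norm_num)]
        refine le_trans ?_ (Real.log_two_gt_d9.le)
        norm_num
      · rw [Real.log_le_iff_le_exp hpos]
        linarith [Real.log_le_sub_one_of_pos (show 0 < x by linarith), Real.exp_one_gt_d9]
    refine le_max_of_le_right ?_
    rw [hfl]
    refine (norm_sub_le _ _).trans ?_
    gcongr
    refine (norm_add_le _ _).trans ?_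
    gcongr
    rw [Complex.norm_real, Real.norm_eq_abs, abs_mul]
    exact mul_le_of_le_one_right (abs_nonneg _) hll

/-- The tail of a sum over primes, cut at `Y < p ≤ X`. -/
lemma hasSum_primes_Ioc (a : ℕ → ℂ) {X Y : ℝ} (hY : 0 ≤ Y) (hYX : Y ≤ X) :
    HasSum (fun p : Nat.Primes => if Y < ((p : ℕ) : ℝ) ∧ ((p : ℕ) : ℝ) ≤ X then a p else 0)
      ((∑ p ∈ primesUpTo X, a p) - ∑ p ∈ primesUpTo Y, a p) := by
  have hX : 0 ≤ X := hY.trans hYX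
  have hsub : primesUpTo Y ⊆ primesUpTo X := fun p hp => by
    rw [mem_primesUpTo hY] at hp
    exact (mem_primesUpTo hX).2 ⟨hp.1.trans hYX, hp.2⟩
  rw [← Finset.sum_sdiff_eq_sub hsub]
  have key : HasSum ({p : ℕ | p.Prime}.indicator
      fun p : ℕ => if Y < (p : ℝ) ∧ (p : ℝ) ≤ X then a p else 0)
      (∑ p ∈ primesUpTo X \ primesUpTo Y, a p) := by
    rw [Finset.sum_congr rfl (g := {p : ℕ | p.Prime}.indicator
      fun p : ℕ => if Y < (p : ℝ) ∧ (p : ℝ) ≤ X then a p else 0)]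
    · refine hasSum_sum_of_ne_finset_zero fun p hp => ?_
      rw [Finset.mem_sdiff, mem_primesUpTo hX, mem_primesUpTo hY] at hp
      rw [Set.indicator_apply]
      split_ifs with h1 h2
      · exact absurd ⟨⟨h2.2, h1⟩, fun h => absurd h.1 (not_le.2 h2.1)⟩ hp
      all_goals rfl
    · intro p hp
      rw [Finset.mem_sdiff, mem_primesUpTo hX, mem_primesUpTo hY] at hp
      rw [Set.indicator_of_mem (show p ∈ {p : ℕ | p.Prime} from hp.1.2),
        if_pos ⟨not_le.1 fun h => hp.2 ⟨h, hp.1.2⟩, hp.1.1⟩]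
  exact hasSum_subtype_iff_indicator.2 key

/-- The weight `p ^ (-s)` differs from the cutoff `s log p ≤ 1` by at most
`min (s log p) (s log p)⁻¹`. -/
lemma abs_exp_neg_sub_ite_le {u : ℝ} (hu : 0 < u) :
    |Real.exp (-u) - if u ≤ 1 then 1 else 0| ≤ min u u⁻¹ := by
  split_ifs with h
  · rw [abs_sub_comm, abs_of_nonneg (by simpa using hu.le)]
    have h1 := Real.add_one_le_exp (-u)
    exact le_min (by linarith)
      ((show 1 - Real.exp (-u) ≤ u by linarith).trans (h.trans ((one_le_inv₀ hu).2 h)))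
  · push Not at h
    have h1 : Real.exp (-u) ≤ u⁻¹ := by
      rw [Real.exp_neg]
      exact inv_anti₀ hu (by linarith [Real.add_one_le_exp u])
    rw [sub_zero, abs_of_pos (Real.exp_pos _)]
    exact le_min (h1.trans ((inv_le_one_of_one_le₀ h.le).trans h.le)) h1

/-- Under the Selberg-orthonormality-type hypotheses on `β1, β2`, there exists `C > 0` such
that for `1/2 < σ ≤ 1` and `2 ≤ Y ≤ exp(1/(2σ−1))` the tail series
`∑_{p > Y} β1(p) conj(β2(p)) / p^{2σ}` converges absolutely and equals
`δ ξ log(1/((σ−1/2) log Y)) + O(1)`. -/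
theorem stmt_4 (β1 β2 : ℕ → ℂ) (ξ ξ1 ξ2 : ℝ) (hξ : 0 ≤ ξ) (hξ1 : 0 ≤ ξ1) (hξ2 : 0 ≤ ξ2)
    (δ : ℝ) (hδ : δ = 0 ∨ δ = 1) (c : ℂ) (A : ℝ) (hA : 0 < A)
    (h12 : ∀ x : ℝ, 3 ≤ x →
      ‖(∑ p ∈ (Finset.range (⌊x⌋₊ + 1)).filter Nat.Prime,
            β1 p * conj (β2 p) / (p : ℂ)) -
          (((δ * ξ * Real.log (Real.log x) : ℝ) : ℂ) + c)‖ ≤ A / Real.log x)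
    (h1 : ∀ x : ℝ, 3 ≤ x →
      |(∑ p ∈ (Finset.range (⌊x⌋₊ + 1)).filter Nat.Prime, ‖β1 p‖ ^ 2 / (p : ℝ)) -
          ξ1 * Real.log (Real.log x)| ≤ A)
    (h2 : ∀ x : ℝ, 3 ≤ x →
      |(∑ p ∈ (Finset.range (⌊x⌋₊ + 1)).filter Nat.Prime, ‖β2 p‖ ^ 2 / (p : ℝ)) -
          ξ2 * Real.log (Real.log x)| ≤ A) :
    ∃ C : ℝ, 0 < C ∧ ∀ σ : ℝ, 1 / 2 < σ → σ ≤ 1 →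
      ∀ Y : ℝ, 2 ≤ Y → Y ≤ Real.exp (1 / (2 * σ - 1)) →
      Summable (fun p : Nat.Primes =>
        ‖(if Y < ((p : ℕ) : ℝ) then
            β1 (p : ℕ) * conj (β2 (p : ℕ)) / (((((p : ℕ) : ℝ) ^ (2 * σ) : ℝ)) : ℂ)
          else 0)‖) ∧
      ‖(∑' p : Nat.Primes,
            if Y < ((p : ℕ) : ℝ) then
              β1 (p : ℕ) * conj (β2 (p : ℕ)) / (((((p : ℕ) : ℝ) ^ (2 * σ) : ℝ)) : ℂ)
            else 0) -
          ((δ * ξ * Real.log (1 / ((σ - 1 / 2) * Real.log Y)) : ℝ) : ℂ)‖ ≤ C := by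
  obtain ⟨C1, hC1, hb1⟩ := exists_sum_mul_min_le (fun p => by positivity) h1
  obtain ⟨C2, hC2, hb2⟩ := exists_sum_mul_min_le (fun p => by positivity) h2
  obtain ⟨B, hB⟩ := exists_norm_sum_sub_le hA.le h12
  have hB0 : 0 ≤ B := (norm_nonneg _).trans (hB 2 le_rfl)
  refine ⟨C1 + C2 + 2 * B + |δ * ξ| * Real.log 2 + 1, by positivity, ?_⟩
  intro σ hσ hσ1 Y hY hYX
  set a : ℕ → ℂ := fun p => β1 p * conj (β2 p) / (p : ℂ)
  set s : ℝ := 2 * σ - 1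
  have hs : 0 < s := by simp only [s]; linarith
  set X : ℝ := Real.exp (1 / s)
  set t : Nat.Primes → ℂ := fun p => if Y < ((p : ℕ) : ℝ) then
    β1 (p : ℕ) * conj (β2 (p : ℕ)) / (((((p : ℕ) : ℝ) ^ (2 * σ) : ℝ)) : ℂ) else 0
  set t₀ : Nat.Primes → ℂ := fun p =>
    if Y < ((p : ℕ) : ℝ) ∧ ((p : ℕ) : ℝ) ≤ X then a p else 0
  have ht₀ : HasSum t₀ _ := hasSum_primes_Ioc a (by linarith) hYX
  set g : ℕ → ℝ := fun p => (‖β1 p‖ ^ 2 / (p : ℝ) + ‖β2 p‖ ^ 2 / (p : ℝ)) *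
    min (s * Real.log p) (s * Real.log p)⁻¹
  have hg : ∀ F : Finset Nat.Primes, ∑ p ∈ F, g p ≤ C1 + C2 := fun F => by
    have hF : ∀ p ∈ F.map ⟨fun q : Nat.Primes => (q : ℕ), Nat.Primes.coe_nat_injective⟩,
        p.Prime := fun p hp => by
      obtain ⟨q, -, rfl⟩ := Finset.mem_map.1 hp
      exact q.2
    have := add_le_add (hb1 s hs _ hF) (hb2 s hs _ hF)
    rw [← Finset.sum_add_distrib, Finset.sum_map] at this
    refine le_trans (le_of_eq (Finset.sum_congr rfl fun p _ => ?_)) this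
    exact add_mul _ _ _
  have hu : ∀ p : Nat.Primes, 0 < s * Real.log ((p : ℕ) : ℝ) := fun p =>
    mul_pos hs (Real.log_pos (by exact_mod_cast p.2.one_lt))
  have hg0 : ∀ p : Nat.Primes, 0 ≤ g p := fun p =>
    mul_nonneg (by positivity) (le_min (hu p).le (inv_pos.2 (hu p)).le)
  have hgs : Summable fun p : Nat.Primes => g p := summable_of_sum_le hg0 hg
  have hdiff : ∀ p, ‖t p - t₀ p‖ ≤ g p := fun p => by
    have hp0 : (0 : ℝ) < ((p : ℕ) : ℝ) := by exact_mod_cast p.2.pos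
    by_cases hYp : Y < ((p : ℕ) : ℝ)
    · have hpX : ((p : ℕ) : ℝ) ≤ X ↔ s * Real.log ((p : ℕ) : ℝ) ≤ 1 := by
        rw [← Real.log_le_iff_le_exp hp0, le_div_iff₀ hs, mul_comm]
      have hpow : (((p : ℕ) : ℝ) ^ (2 * σ))⁻¹ =
          (((p : ℕ) : ℝ))⁻¹ * Real.exp (-(s * Real.log ((p : ℕ) : ℝ))) := by
        rw [Real.rpow_def_of_pos hp0, ← Real.exp_neg]
        nth_rw 2 [← Real.exp_log hp0]
        rw [← Real.exp_neg, ← Real.exp_add]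
        congr 1
        simp only [s]
        ring
      have heq : t p - t₀ p = a p * ((Real.exp (-(s * Real.log ((p : ℕ) : ℝ))) -
          if s * Real.log ((p : ℕ) : ℝ) ≤ 1 then 1 else 0 : ℝ) : ℂ) := by
        simp only [t, t₀, a, hYp, hpX, true_and, if_true]
        rw [div_eq_mul_inv, ← Complex.ofReal_inv, hpow]
        split_ifs <;> push_cast <;> ring
      rw [heq, norm_mul, Complex.norm_real, Real.norm_eq_abs]
      refine mul_le_mul ?_ (abs_exp_neg_sub_ite_le (hu p)) (abs_nonneg _) (by positivity)
      simp only [a]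
      rw [norm_div, norm_mul, RCLike.norm_conj, Complex.norm_natCast, ← add_div]
      gcongr
      nlinarith [sq_nonneg (‖β1 p‖ - ‖β2 p‖), sq_nonneg ‖β1 p‖, sq_nonneg ‖β2 p‖]
    · simpa [t, t₀, hYp] using hg0 p
  have hds : Summable fun p => t p - t₀ p := Summable.of_norm_bounded hgs hdiff
  have hts : Summable t := by simpa using hds.add ht₀.summable
  refine ⟨hts.norm, ?_⟩
  have htail : ‖∑' p, (t p - t₀ p)‖ ≤ C1 + C2 :=
    (tsum_of_norm_bounded hgs.hasSum hdiff).trans (hgs.tsum_le_of_sum_le hg)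
  rw [hts.tsum_sub ht₀.summable, ht₀.tsum_eq] at htail
  have hlogY : 0 < Real.log Y := Real.log_pos (by linarith)
  have hmain : Real.log (1 / ((σ - 1 / 2) * Real.log Y)) =
      Real.log 2 + (Real.log (Real.log X) - Real.log (Real.log Y)) := by
    rw [Real.log_exp, ← Real.log_div (by positivity) hlogY.ne',
      ← Real.log_mul (by norm_num) (by positivity)]
    congr 1
    have : σ - 1 / 2 = s / 2 := by simp only [s]; ring
    rw [this]
    field_simp
  have hBX := hB X (hY.trans hYX)
  have hBY := hB Y hY
  set SX := ∑ p ∈ primesUpTo X, a p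
  set SY := ∑ p ∈ primesUpTo Y, a p
  have hsplit : (∑' p, t p) - ((δ * ξ * Real.log (1 / ((σ - 1 / 2) * Real.log Y)) : ℝ) : ℂ) =
      ((∑' p, t p) - (SX - SY))
      + (SX - (((δ * ξ * Real.log (Real.log X) : ℝ) : ℂ) + c))
      - (SY - (((δ * ξ * Real.log (Real.log Y) : ℝ) : ℂ) + c))
      - ((δ * ξ * Real.log 2 : ℝ) : ℂ) := by
    rw [hmain]
    push_cast
    ring
  have hlast : ‖((δ * ξ * Real.log 2 : ℝ) : ℂ)‖ = |δ * ξ| * Real.log 2 := by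
    rw [Complex.norm_real, Real.norm_eq_abs, abs_mul,
      abs_of_pos (Real.log_pos (by norm_num : (1 : ℝ) < 2))]
  rw [hsplit]
  refine (norm_sub_le _ _).trans ?_
  rw [hlast]
  have := (norm_sub_le (((∑' p, t p) - (SX - SY))
      + (SX - (((δ * ξ * Real.log (Real.log X) : ℝ) : ℂ) + c)))
      (SY - (((δ * ξ * Real.log (Real.log Y) : ℝ) : ℂ) + c)))
  have := norm_add_le ((∑' p, t p) - (SX - SY))
      (SX - (((δ * ξ * Real.log (Real.log X) : ℝ) : ℂ) + c))
  linarith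
end

section
/- There exists an absolute constant C > 0 such that for all real numbers z ≥ 2 and T ≥ 2, every positive integer k with k ≤ log T / log z, and every complex-valued function a on the primes, (1/T) ∫_T^{2T} | ∑_{p ≤ z} a(p) p^{−it} |^{2k} dt ≤ C · k! · ( ∑_{p ≤ z} |a(p)|² )^{k}, where the sums run over primes p ≤ z. -/
open Finset MeasureTheory

section GaussianMeanValue

open Complex ComplexConjugate

variable {ι : Type*} (s : Finset ι) (c : ι → ℂ) (φ : ι → ℝ)

lemma norm_sq_exp_sum_mul_gaussian (b t : ℝ) :
    ((‖∑ i ∈ s, c i * cexp (I * φ i * t)‖ ^ 2 * Real.exp (-b * t ^ 2) : ℝ) : ℂ) =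
      ∑ i ∈ s, ∑ j ∈ s, c i * conj (c j) *
        (cexp (I * ((φ i - φ j : ℝ) : ℂ) * t) * cexp (-(b : ℂ) * (t : ℂ) ^ 2)) := by
  push_cast
  rw [← mul_conj', map_sum, sum_mul_sum, sum_mul]
  refine sum_congr rfl fun i _ ↦ ?_
  rw [sum_mul]
  refine sum_congr rfl fun j _ ↦ ?_
  have h : cexp (I * (φ i - φ j : ℂ) * t) = cexp (I * φ i * t) * cexp (-I * φ j * t) := by
    rw [← Complex.exp_add]; ring_nf
  rw [h, map_mul, ← exp_conj]
  simp only [map_mul, conj_I, conj_ofReal]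
  ring

lemma integrable_exp_mul_gaussian {b : ℝ} (hb : 0 < b) (x : ℝ) :
    Integrable fun t : ℝ ↦ cexp (I * x * t) * cexp (-(b : ℂ) * (t : ℂ) ^ 2) := by
  convert! integrable_cexp_quadratic (b := (b : ℂ)) (by simpa using hb) (I * x) 0 using 2 with t
  rw [← Complex.exp_add]; ring_nf

lemma integrable_norm_sq_exp_sum_mul_gaussian {b : ℝ} (hb : 0 < b) :
    Integrable fun t : ℝ ↦
      ‖∑ i ∈ s, c i * cexp (I * φ i * t)‖ ^ 2 * Real.exp (-b * t ^ 2) := by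
  suffices h : Integrable fun t : ℝ ↦
      ((‖∑ i ∈ s, c i * cexp (I * φ i * t)‖ ^ 2 * Real.exp (-b * t ^ 2) : ℝ) : ℂ) by
    simpa only [RCLike.re_eq_complex_re, ofReal_re] using h.re
  simp only [norm_sq_exp_sum_mul_gaussian]
  exact integrable_finsetSum _ fun i _ ↦ integrable_finsetSum _ fun j _ ↦
    (integrable_exp_mul_gaussian hb _).const_mul _

lemma integral_norm_sq_exp_sum_mul_gaussian {b : ℝ} (hb : 0 < b) :
    ((∫ t : ℝ, ‖∑ i ∈ s, c i * cexp (I * φ i * t)‖ ^ 2 * Real.exp (-b * t ^ 2) : ℝ) : ℂ) =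
      ∑ i ∈ s, ∑ j ∈ s, c i * conj (c j) *
        ((√(Real.pi / b) * Real.exp (-(φ i - φ j) ^ 2 / (4 * b)) : ℝ) : ℂ) := by
  have hint (x : ℝ) : ∫ t : ℝ, cexp (I * x * t) * cexp (-(b : ℂ) * (t : ℂ) ^ 2) =
      ((√(Real.pi / b) * Real.exp (-x ^ 2 / (4 * b)) : ℝ) : ℂ) := by
    rw [fourierIntegral_gaussian (by simpa using hb), Real.sqrt_eq_rpow, ofReal_mul,
      ofReal_cpow (by positivity)]
    push_cast
    rfl
  rw [← integral_complex_ofReal]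
  simp_rw [norm_sq_exp_sum_mul_gaussian]
  rw [integral_finsetSum _ fun i _ ↦ integrable_finsetSum _ fun j _ ↦
    (integrable_exp_mul_gaussian hb _).const_mul _]
  refine sum_congr rfl fun i _ ↦ ?_
  rw [integral_finsetSum _ fun j _ ↦ (integrable_exp_mul_gaussian hb _).const_mul _]
  refine sum_congr rfl fun j _ ↦ ?_
  rw [integral_const_mul, hint]

/-- A Schur-test bound for the Gaussian-weighted mean square of an exponential sum. -/
lemma integral_norm_sq_exp_sum_mul_gaussian_le {b K : ℝ} (hb : 0 < b)
    (hK : ∀ i ∈ s, ∑ j ∈ s, Real.exp (-(φ i - φ j) ^ 2 / (4 * b)) ≤ K) :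
    ∫ t : ℝ, ‖∑ i ∈ s, c i * cexp (I * φ i * t)‖ ^ 2 * Real.exp (-b * t ^ 2) ≤
      √(Real.pi / b) * K * ∑ i ∈ s, ‖c i‖ ^ 2 := by
  set E : ι → ι → ℝ := fun i j ↦ Real.exp (-(φ i - φ j) ^ 2 / (4 * b))
  have hE : ∀ i j, E i j = E j i := fun i j ↦ by simp only [E]; ring_nf
  have hdiag : ∑ i ∈ s, ∑ j ∈ s, ‖c i‖ ^ 2 * E i j ≤ K * ∑ i ∈ s, ‖c i‖ ^ 2 := by
    rw [mul_sum]
    refine sum_le_sum fun i hi ↦ ?_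
    rw [← mul_sum, mul_comm]
    exact mul_le_mul_of_nonneg_right (hK i hi) (by positivity)
  have hsymm : ∑ i ∈ s, ∑ j ∈ s, ‖c j‖ ^ 2 * E i j = ∑ i ∈ s, ∑ j ∈ s, ‖c i‖ ^ 2 * E i j := by
    rw [sum_comm]
    exact sum_congr rfl fun i _ ↦ sum_congr rfl fun j _ ↦ by rw [hE]
  refine (Real.le_norm_self _).trans ?_
  rw [← norm_real, integral_norm_sq_exp_sum_mul_gaussian s c φ hb]
  calc
    _ ≤ ∑ i ∈ s, ∑ j ∈ s, ‖c i‖ * ‖c j‖ * (√(Real.pi / b) * E i j) := by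
      refine (norm_sum_le _ _).trans (sum_le_sum fun i _ ↦
        (norm_sum_le _ _).trans (sum_le_sum fun j _ ↦ ?_))
      rw [norm_mul, norm_mul, norm_conj, norm_real, Real.norm_of_nonneg (by positivity)]
    _ ≤ ∑ i ∈ s, ∑ j ∈ s, √(Real.pi / b) * (‖c i‖ ^ 2 * E i j + ‖c j‖ ^ 2 * E i j) / 2 := by
      refine sum_le_sum fun i _ ↦ sum_le_sum fun j _ ↦ ?_
      have h : 0 ≤ √(Real.pi / b) * E i j := by positivity
      nlinarith [mul_nonneg h (sq_nonneg (‖c i‖ - ‖c j‖))]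
    _ = √(Real.pi / b) * (∑ i ∈ s, ∑ j ∈ s, ‖c i‖ ^ 2 * E i j) / 2 +
        √(Real.pi / b) * (∑ i ∈ s, ∑ j ∈ s, ‖c j‖ ^ 2 * E i j) / 2 := by
      simp only [mul_sum, sum_div, mul_add, add_div, sum_add_distrib]
    _ = √(Real.pi / b) * ∑ i ∈ s, ∑ j ∈ s, ‖c i‖ ^ 2 * E i j := by
      rw [hsymm]
      ring
    _ ≤ _ := by
      rw [mul_assoc]
      gcongr

end GaussianMeanValue

lemma summable_exp_neg_int_sq_div_four :
    Summable fun j : ℤ ↦ Real.exp (-(j : ℝ) ^ 2 / 4) := by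
  have h : Summable fun j : ℤ ↦ 4 * (1 / (j : ℝ) ^ 2) :=
    (Real.summable_one_div_int_pow.2 one_lt_two).mul_left 4
  refine h.of_norm_bounded_eventually ?_
  rw [Filter.eventually_cofinite]
  refine (Set.finite_singleton (0 : ℤ)).subset fun j hj ↦ ?_
  by_contra h0
  refine hj ?_
  have h0' : (j : ℝ) ≠ 0 := by exact_mod_cast h0
  have hpos : 0 < (j : ℝ) ^ 2 / 4 := by positivity
  rw [Real.norm_of_nonneg (Real.exp_nonneg _), neg_div, Real.exp_neg]
  calc (Real.exp ((j : ℝ) ^ 2 / 4))⁻¹ ≤ ((j : ℝ) ^ 2 / 4)⁻¹ := by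
        gcongr
        linarith [Real.add_one_le_exp ((j : ℝ) ^ 2 / 4)]
    _ = _ := by field_simp

lemma abs_sub_le_mul_abs_log_sub_log {x y T : ℝ} (hx : 0 < x) (hy : 0 < y)
    (hxT : x ≤ T) (hyT : y ≤ T) : |x - y| ≤ T * |Real.log x - Real.log y| := by
  wlog h : y ≤ x generalizing x y
  · rw [abs_sub_comm, abs_sub_comm (Real.log x)]
    exact this hy hx hyT hxT (le_of_not_ge h)
  have hlog : Real.log y ≤ Real.log x := Real.log_le_log hy h
  rw [abs_of_nonneg (sub_nonneg.2 h), abs_of_nonneg (sub_nonneg.2 hlog)]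
  have h1 := Real.log_le_sub_one_of_pos (div_pos hy hx)
  rw [Real.log_div hy.ne' hx.ne'] at h1
  have h2 : x - y = x * (1 - y / x) := by field_simp
  rw [h2]
  exact mul_le_mul hxT (by linarith) (by rw [sub_nonneg, div_le_one hx]; exact h) (by linarith)

lemma sum_exp_neg_sq_log_sub_log_le {ι : Type*} (s : Finset ι) (N : ι → ℕ)
    (hN : Set.InjOn N s) {T : ℝ} (hpos : ∀ i ∈ s, 0 < N i) (hT : ∀ i ∈ s, (N i : ℝ) ≤ T)
    {i : ι} (hi : i ∈ s) :
    ∑ j ∈ s, Real.exp (-(T * (Real.log (N i) - Real.log (N j))) ^ 2 / 4) ≤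
      ∑' j : ℤ, Real.exp (-(j : ℝ) ^ 2 / 4) := by
  calc
    _ ≤ ∑ j ∈ s, Real.exp (-(((N i : ℤ) - N j : ℤ) : ℝ) ^ 2 / 4) := by
      refine sum_le_sum fun j hj ↦ ?_
      have hT0 : 0 ≤ T := (Nat.cast_nonneg _).trans (hT i hi)
      have h : (((N i : ℤ) - N j : ℤ) : ℝ) ^ 2 ≤
          (T * (Real.log (N i) - Real.log (N j))) ^ 2 := by
        rw [sq_le_sq, abs_mul, abs_of_nonneg hT0]
        push_cast
        exact abs_sub_le_mul_abs_log_sub_log (by exact_mod_cast hpos i hi)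
          (by exact_mod_cast hpos j hj) (hT i hi) (hT j hj)
      gcongr
    _ = ∑ m ∈ s.image fun j ↦ (N i : ℤ) - N j, Real.exp (-(m : ℝ) ^ 2 / 4) := by
      rw [sum_image]
      intro j hj l hl hjl
      exact hN hj hl (by simpa using hjl)
    _ ≤ _ := summable_exp_neg_int_sq_div_four.sum_le_tsum _ fun _ _ ↦ Real.exp_nonneg _

/-- The mean value theorem for Dirichlet polynomials of length at most `T`. -/
lemma exists_integral_norm_sq_dirichlet_polynomial_le :
    ∃ C : ℝ, 0 < C ∧ ∀ (ι : Type*) (s : Finset ι) (N : ι → ℕ) (c : ι → ℂ) (T : ℝ), 0 < T →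
      Set.InjOn N s → (∀ i ∈ s, 0 < N i) → (∀ i ∈ s, (N i : ℝ) ≤ T) →
      (1 / T) * ∫ t in T..(2 * T),
        ‖∑ i ∈ s, c i * Complex.exp (-(Complex.I * (t : ℂ)) * (Real.log (N i) : ℂ))‖ ^ 2 ≤
        C * ∑ i ∈ s, ‖c i‖ ^ 2 := by
  set K := ∑' j : ℤ, Real.exp (-(j : ℝ) ^ 2 / 4)
  have hK : 0 < K := summable_exp_neg_int_sq_div_four.tsum_pos
    (fun _ ↦ Real.exp_nonneg _) 0 (Real.exp_pos _)
  refine ⟨Real.exp 4 * (√Real.pi * K), by positivity, fun ι s N c T hT hN hpos hNT ↦ ?_⟩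
  set b : ℝ := (T ^ 2)⁻¹ with hb_def
  have hb : 0 < b := by positivity
  set φ : ι → ℝ := fun i ↦ -Real.log (N i)
  set F : ℝ → ℝ := fun t ↦ ‖∑ i ∈ s, c i * Complex.exp (Complex.I * φ i * t)‖ ^ 2 with hF
  have hFeq : ∀ t : ℝ,
      ‖∑ i ∈ s, c i * Complex.exp (-(Complex.I * (t : ℂ)) * (Real.log (N i) : ℂ))‖ ^ 2 = F t := by
    intro t
    simp only [hF, φ]
    congr 2
    refine sum_congr rfl fun i _ ↦ ?_
    congr 2
    push_cast
    ring
  have hFcont : Continuous F := by simp only [hF]; fun_prop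
  have hint : Integrable fun t ↦ F t * Real.exp (-b * t ^ 2) :=
    integrable_norm_sq_exp_sum_mul_gaussian s c φ hb
  have hle : ∫ t, F t * Real.exp (-b * t ^ 2) ≤ √(Real.pi / b) * K * ∑ i ∈ s, ‖c i‖ ^ 2 := by
    refine integral_norm_sq_exp_sum_mul_gaussian_le s c φ hb fun i hi ↦ ?_
    refine le_trans (le_of_eq ?_) (sum_exp_neg_sq_log_sub_log_le s N hN hpos hNT hi)
    refine sum_congr rfl fun j _ ↦ ?_
    congr 1
    simp only [φ, hb_def]
    field_simp
    ring
  have hsqrt : √(Real.pi / b) = √Real.pi * T := by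
    rw [hb_def, div_inv_eq_mul, Real.sqrt_mul Real.pi_pos.le, Real.sqrt_sq hT.le]
  have hTT : T ≤ 2 * T := by linarith
  simp_rw [hFeq]
  have hshort : ∫ t in T..(2 * T), F t ≤ Real.exp 4 * ∫ t, F t * Real.exp (-b * t ^ 2) := by
    calc
      _ ≤ ∫ t in T..(2 * T), Real.exp 4 * (F t * Real.exp (-b * t ^ 2)) := by
        refine intervalIntegral.integral_mono_on hTT (hFcont.intervalIntegrable _ _)
          ((hint.const_mul _).intervalIntegrable) fun t ht ↦ ?_
        have h1 : b * t ^ 2 ≤ 4 := by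
          rw [hb_def, inv_mul_le_iff₀ (by positivity)]
          nlinarith [ht.1, ht.2]
        have h2 : 1 ≤ Real.exp 4 * Real.exp (-b * t ^ 2) := by
          rw [← Real.exp_add]
          exact Real.one_le_exp (by linarith)
        have h3 : 0 ≤ F t := by positivity
        nlinarith
      _ = Real.exp 4 * ∫ t in Set.Ioc T (2 * T), F t * Real.exp (-b * t ^ 2) := by
        rw [intervalIntegral.integral_const_mul, intervalIntegral.integral_of_le hTT]
      _ ≤ _ := by
        gcongr
        · exact .of_forall fun t ↦ by positivity
        · exact Measure.restrict_le_self
  calc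
    _ ≤ (1 / T) * (Real.exp 4 * (√(Real.pi / b) * K * ∑ i ∈ s, ‖c i‖ ^ 2)) := by
      gcongr
      exact hshort.trans (by gcongr)
    _ = _ := by
      rw [hsqrt]
      field_simp

lemma Multiset.countPerms_le_factorial_card {α : Type*} [DecidableEq α] (m : Multiset α) :
    m.countPerms ≤ m.card.factorial := by
  rw [Multiset.countPerms, Finsupp.multinomial_eq, Nat.multinomial]
  refine (Nat.div_le_self _ _).trans (le_of_eq ?_)
  rw [← Multiset.toFinsupp_sum_eq m]
  rfl

lemma sum_norm_sq_sym_coeff_le {α : Type*} [DecidableEq α] (s : Finset α) (a : α → ℂ) (k : ℕ) :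
    ∑ m ∈ s.sym k, ‖(m.val.countPerms : ℂ) * (m.val.map a).prod‖ ^ 2 ≤
      k.factorial * (∑ x ∈ s, ‖a x‖ ^ 2) ^ k := by
  rw [Finset.sum_pow, mul_sum]
  refine sum_le_sum fun m _ ↦ ?_
  have hnorm : ‖(m.val.map a).prod‖ ^ 2 = (m.val.map fun x ↦ ‖a x‖ ^ 2).prod := by
    rw [Multiset.prod_map_pow]
    congr 1
    simpa using map_multiset_prod (normHom : ℂ →*₀ ℝ) (m.val.map a)
  have hle : (m.val.countPerms : ℝ) ≤ k.factorial := by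
    have := m.val.countPerms_le_factorial_card
    rw [show m.val.card = k from m.2] at this
    exact_mod_cast this
  rw [norm_mul, mul_pow, hnorm, Complex.norm_natCast, sq, mul_assoc]
  have h0 : 0 ≤ (m.val.map fun x ↦ ‖a x‖ ^ 2).prod := hnorm ▸ by positivity
  gcongr

lemma sym_prod_injOn {s : Finset ℕ} (hs : ∀ p ∈ s, p.Prime) (k : ℕ) :
    Set.InjOn (fun m : Sym ℕ k ↦ m.val.prod) (s.sym k) := by
  intro m hm l hl h
  have hprime {m : Sym ℕ k} (hm : m ∈ s.sym k) : ∀ p ∈ m.val, Prime p := fun p hp ↦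
    (hs p (mem_sym_iff.1 hm p hp)).prime
  apply Subtype.ext
  rw [← UniqueFactorizationMonoid.normalizedFactors_prod_of_prime (hprime hm),
    ← UniqueFactorizationMonoid.normalizedFactors_prod_of_prime (hprime hl)]
  exact congrArg _ h

lemma prod_map_mul_exp_log (a : ℕ → ℂ) (w : ℂ) (m : Multiset ℕ) (hm : ∀ p ∈ m, p ≠ 0) :
    (m.map fun p ↦ a p * Complex.exp (w * (Real.log p : ℂ))).prod =
      (m.map a).prod * Complex.exp (w * (Real.log (m.prod : ℕ) : ℂ)) := by
  induction m using Multiset.induction with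
  | empty => simp
  | cons p m ih =>
    have hp : (p : ℝ) ≠ 0 := by exact_mod_cast hm p (Multiset.mem_cons_self p m)
    have hm' : ∀ q ∈ m, q ≠ 0 := fun q hq ↦ hm q (Multiset.mem_cons_of_mem hq)
    have hprod : ((m.prod : ℕ) : ℝ) ≠ 0 := by
      exact_mod_cast Multiset.prod_ne_zero fun h ↦ hm' 0 h rfl
    rw [Multiset.map_cons, Multiset.prod_cons, ih hm', Multiset.map_cons, Multiset.prod_cons,
      Multiset.prod_cons, Nat.cast_mul, Real.log_mul hp hprod, Complex.ofReal_add, mul_add,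
      Complex.exp_add]
    ring

/-- There is an absolute constant `C > 0` such that for all `z, T ≥ 2`, every positive
integer `k ≤ log T / log z`, and every complex-valued `a`,
`(1/T) ∫_T^{2T} |∑_{p ≤ z} a(p) p^{−it}|^{2k} dt ≤ C k! (∑_{p ≤ z} |a(p)|²)^k`. -/
theorem stmt_7 :
    ∃ C : ℝ, 0 < C ∧ ∀ z T : ℝ, 2 ≤ z → 2 ≤ T → ∀ k : ℕ, 1 ≤ k →
      (k : ℝ) ≤ Real.log T / Real.log z → ∀ a : ℕ → ℂ,
      (1 / T) * ∫ t in T..(2 * T),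
          ‖∑ p ∈ (Finset.range (⌊z⌋₊ + 1)).filter Nat.Prime,
              a p * Complex.exp (-(Complex.I * (t : ℂ)) * (Real.log p : ℂ))‖ ^ (2 * k) ≤
        C * (k.factorial : ℝ) *
          (∑ p ∈ (Finset.range (⌊z⌋₊ + 1)).filter Nat.Prime, ‖a p‖ ^ 2) ^ k := by
  obtain ⟨C, hC, hmv⟩ := exists_integral_norm_sq_dirichlet_polynomial_le
  refine ⟨C, hC, fun z T hz hT k _ hk a ↦ ?_⟩
  set P := (Finset.range (⌊z⌋₊ + 1)).filter Nat.Prime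
  have hprime : ∀ p ∈ P, p.Prime := fun p hp ↦ (mem_filter.1 hp).2
  have hPz : ∀ p ∈ P, p ≤ ⌊z⌋₊ := fun p hp ↦
    Nat.lt_succ_iff.1 (mem_range.1 (mem_filter.1 hp).1)
  have hzT : z ^ k ≤ T := by
    rw [le_div_iff₀ (Real.log_pos (by linarith)), ← Real.log_pow] at hk
    exact (Real.log_le_log_iff (by positivity) (by positivity)).1 hk
  have hmem {m : Sym ℕ k} (hm : m ∈ P.sym k) : ∀ p ∈ m.val, p ∈ P := mem_sym_iff.1 hm
  have hne {m : Sym ℕ k} (hm : m ∈ P.sym k) : ∀ p ∈ m.val, p ≠ 0 :=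
    fun p hp ↦ (hprime p (hmem hm p hp)).ne_zero
  have hpos : ∀ m ∈ P.sym k, 0 < m.val.prod := fun m hm ↦
    Nat.pos_of_ne_zero (Multiset.prod_ne_zero fun h ↦ hne hm 0 h rfl)
  have hlen : ∀ m ∈ P.sym k, (m.val.prod : ℝ) ≤ T := fun m hm ↦ by
    have h := Multiset.prod_le_pow_card m.val ⌊z⌋₊ fun p hp ↦ hPz p (hmem hm p hp)
    rw [show m.val.card = k from m.2] at h
    calc (m.val.prod : ℝ) ≤ (⌊z⌋₊ : ℝ) ^ k := by exact_mod_cast h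
      _ ≤ z ^ k := by gcongr; exact Nat.floor_le (by linarith)
      _ ≤ T := hzT
  have hexpand (t : ℝ) :
      ‖∑ p ∈ P, a p * Complex.exp (-(Complex.I * (t : ℂ)) * (Real.log p : ℂ))‖ ^ (2 * k) =
        ‖∑ m ∈ P.sym k, (m.val.countPerms : ℂ) * (m.val.map a).prod *
          Complex.exp (-(Complex.I * (t : ℂ)) * (Real.log (m.val.prod : ℕ) : ℂ))‖ ^ 2 := by
    rw [mul_comm 2 k, pow_mul, ← norm_pow, Finset.sum_pow]
    congr 2
    refine sum_congr rfl fun m hm ↦ ?_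
    rw [prod_map_mul_exp_log a _ _ (hne hm), mul_assoc]
  simp_rw [hexpand]
  refine (hmv _ (P.sym k) (fun m ↦ m.val.prod) _ T (by linarith)
    (sym_prod_injOn hprime k) hpos hlen).trans ?_
  rw [mul_assoc]
  gcongr
  exact sum_norm_sq_sym_coeff_le P a k
end

section
/- Let Δ > 0 and let a < b be real numbers, I = [a, b]. Define, for x ∈ ℝ: K(x) := (sin(πx)/(πx))² (with K(0) = 1), H(x) := (sin(πx)/π)² · ( 2/x + ∑_{n=1}^∞ ( 1/(x−n)² − 1/(x+n)² ) ), B⁻(x) := H(x) − K(x), and F(x) := (1/2)·( B⁻(Δ(x − a)) + B⁻(Δ(b − x)) ). Then: (i) for almost every x ∈ ℝ one has |F(x)| ≤ 1 and 0 ≤ 1_I(x) − F(x) ≤ K(Δ(x − a)) + K(Δ(b − x)); (ii) F is Lebesgue integrable on ℝ and its Fourier transform F̂(y) := ∫_ℝ F(x) e^{−2πixy} dx satisfies F̂(y) = 0 for every real y with |y| ≥ Δ; (iii) there is an absolute constant C > 0 such that |F̂(y) − 1̂_I(y)| ≤ C/Δ for every real y with |y| < Δ, where 1̂_I(y) :=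 ∫_a^b e^{−2πixy} dx. -/
open MeasureTheory

/-- The Fejér kernel `K(x) = (sin(πx)/(πx))²`, with `K(0) = 1`. -/
noncomputable def BSK (x : ℝ) : ℝ :=
  if x = 0 then 1 else (Real.sin (Real.pi * x) / (Real.pi * x)) ^ 2

/-- Beurling's function
`H(x) = (sin(πx)/π)² (2/x + ∑_{n ≥ 1} (1/(x−n)² − 1/(x+n)²))`. -/
noncomputable def BSH (x : ℝ) : ℝ :=
  (Real.sin (Real.pi * x) / Real.pi) ^ 2 *
    (2 / x + ∑' n : ℕ, (1 / (x - (n + 1 : ℕ)) ^ 2 - 1 / (x + (n + 1 : ℕ)) ^ 2))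

/-- The Beurling minorant `B⁻(x) = H(x) − K(x)` of `sgn(x)`. -/
noncomputable def BSBminus (x : ℝ) : ℝ := BSH x - BSK x

/-- The Beurling–Selberg minorant `F(x) = (B⁻(Δ(x−a)) + B⁻(Δ(b−x)))/2` of the indicator
function of `[a, b]`. -/
noncomputable def BSF (Δ a b x : ℝ) : ℝ :=
  (1 / 2) * (BSBminus (Δ * (x - a)) + BSBminus (Δ * (b - x)))

lemma BSK_zero : BSK 0 = 1 := by simp [BSK]

lemma BSK_neg (x : ℝ) : BSK (-x) = BSK x := by
  by_cases h : x = 0 <;> simp [BSK, h]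

lemma BSK_nonneg (x : ℝ) : 0 ≤ BSK x := by
  unfold BSK; split_ifs <;> positivity

lemma BSK_eq {x : ℝ} (hx : x ≠ 0) : BSK x = (Real.sin (Real.pi * x) / Real.pi) ^ 2 / x ^ 2 := by
  rw [BSK, if_neg hx, ← div_pow, div_div]

lemma sq_norm_integral_exp (y : ℝ) :
    ‖∫ t in (0 : ℝ)..1, Complex.exp ((2 * Real.pi * y : ℝ) * Complex.I * t)‖ ^ 2 = BSK y := by
  by_cases hy : y = 0
  · simp [hy, BSK]
  have hc : ((2 * Real.pi * y : ℝ) * Complex.I : ℂ) ≠ 0 := by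
    simp [hy, Real.pi_ne_zero]
  rw [integral_exp_mul_complex hc]
  have := Complex.norm_exp_I_mul_ofReal_sub_one (2 * Real.pi * y)
  rw [norm_div]
  simp only [Complex.ofReal_one, mul_one, Complex.ofReal_zero, mul_zero, Complex.exp_zero]
  rw [mul_comm _ Complex.I, this, BSK, if_neg hy, norm_mul Complex.I, Complex.norm_I, one_mul,
    Complex.norm_real, ← norm_div, Real.norm_eq_abs, sq_abs]
  congr 1
  rw [show 2 * Real.pi * y / 2 = Real.pi * y by ring]
  field_simp

lemma hasSum_BSK_int (x : ℝ) : HasSum (fun n : ℤ => BSK (x - n)) 1 := by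
  have hL : MemLp (fun t : ℝ => Complex.exp ((2 * Real.pi * x : ℝ) * Complex.I * t)) 2
      (volume.restrict (Set.Ioc 0 1)) := by
    refine MemLp.of_bound (by fun_prop) 1 (Filter.Eventually.of_forall fun t => le_of_eq ?_)
    rw [show ((2 * Real.pi * x : ℝ) * Complex.I * t : ℂ) = ((2 * Real.pi * x * t : ℝ) : ℂ) *
      Complex.I by push_cast; ring, Complex.norm_exp_ofReal_mul_I]
  convert hasSum_sq_fourierCoeffOn zero_lt_one hL using 1
  · ext n
    rw [fourierCoeffOn_eq_integral, ← sq_norm_integral_exp]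
    simp only [sub_zero, div_one, one_smul]
    congr 2
    refine intervalIntegral.integral_congr fun t _ => ?_
    simp only [smul_eq_mul]
    rw [fourier_coe_apply, ← Complex.exp_add]
    congr 1
    push_cast
    ring
  · have : ∀ t : ℝ, ‖Complex.exp ((2 * Real.pi * x : ℝ) * Complex.I * t)‖ = 1 := fun t => by
      rw [show ((2 * Real.pi * x : ℝ) * Complex.I * t : ℂ) = ((2 * Real.pi * x * t : ℝ) : ℂ) *
      Complex.I by push_cast; ring, Complex.norm_exp_ofReal_mul_I]
    simp only [this]
    simp

lemma summable_BSK_sub (x : ℝ) : Summable fun n : ℕ => BSK (x - (n + 1 : ℕ)) :=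
  ((hasSum_BSK_int x).summable.comp_injective (i := fun n : ℕ => ((n + 1 : ℕ) : ℤ))
    (fun a b h => by simpa using h)).congr fun n => by simp

lemma summable_BSK_add (x : ℝ) : Summable fun n : ℕ => BSK (x + (n + 1 : ℕ)) :=
  (summable_BSK_sub (-x)).congr fun n => by rw [← BSK_neg]; congr 1; ring

lemma BSK_add_tsum (x : ℝ) :
    BSK x + ∑' n : ℕ, BSK (x - (n + 1 : ℕ)) + ∑' n : ℕ, BSK (x + (n + 1 : ℕ)) = 1 := by
  have h := hasSum_BSK_int x
  have h1 : Summable fun n : ℕ => BSK (x - (n : ℤ)) :=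
    h.summable.comp_injective (i := fun n : ℕ => (n : ℤ)) (fun a b h => by simpa using h)
  have h2 : Summable fun n : ℕ => BSK (x - (-((n : ℤ) + 1) : ℤ)) :=
    h.summable.comp_injective (i := fun n : ℕ => -((n : ℤ) + 1)) (fun a b h => by simpa using h)
  rw [← h.tsum_eq, tsum_of_nat_of_neg_add_one (f := fun n : ℤ => BSK (x - n)) h1 h2,
    h1.tsum_eq_zero_add]
  congr 1
  · simp
  · refine tsum_congr fun n => ?_
    congr 1; push_cast; ring

lemma BSK_le_one (x : ℝ) : BSK x ≤ 1 := by
  have h1 : 0 ≤ ∑' n : ℕ, BSK (x - (n + 1 : ℕ)) := tsum_nonneg fun _ => BSK_nonneg _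
  have h2 : 0 ≤ ∑' n : ℕ, BSK (x + (n + 1 : ℕ)) := tsum_nonneg fun _ => BSK_nonneg _
  linarith [BSK_add_tsum x]

lemma BSH_eq {x : ℝ} (hx : ∀ n : ℤ, x ≠ n) :
    BSH x = 2 * x * BSK x + (∑' n : ℕ, BSK (x - (n + 1 : ℕ)) - ∑' n : ℕ, BSK (x + (n + 1 : ℕ))) := by
  have h0 : x ≠ 0 := by simpa using hx 0
  have h1 : ∀ n : ℕ, x - (n + 1 : ℕ) ≠ 0 := fun n h => hx (n + 1 : ℕ) (by
    rw [Int.cast_natCast]; linarith)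
  have h2 : ∀ n : ℕ, x + (n + 1 : ℕ) ≠ 0 := fun n h => hx (-(n + 1 : ℕ)) (by
    rw [Int.cast_neg, Int.cast_natCast]; linarith)
  rw [BSH, mul_add, ← tsum_mul_left, ← (summable_BSK_sub x).tsum_sub (summable_BSK_add x)]
  congr 1
  · rw [BSK_eq h0]; field_simp
  · refine tsum_congr fun n => ?_
    have e1 : Real.sin (Real.pi * (x - (n + 1 : ℕ))) ^ 2 = Real.sin (Real.pi * x) ^ 2 := by
      rw [mul_sub, mul_comm Real.pi ((n + 1 : ℕ) : ℝ), Real.sin_sub_nat_mul_pi, mul_pow, ← pow_mul,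
        mul_comm _ 2, pow_mul]
      simp
    have e2 : Real.sin (Real.pi * (x + (n + 1 : ℕ))) ^ 2 = Real.sin (Real.pi * x) ^ 2 := by
      rw [mul_add, mul_comm Real.pi ((n + 1 : ℕ) : ℝ), Real.sin_add_nat_mul_pi, mul_pow, ← pow_mul,
        mul_comm _ 2, pow_mul]
      simp
    simp only [BSK_eq (h1 n), BSK_eq (h2 n), div_pow, e1, e2]
    ring

lemma hasSum_sub_succ {f : ℕ → ℝ} (hf : Antitone f) (h0 : Filter.Tendsto f Filter.atTop (nhds 0)) :
    HasSum (fun n => f n - f (n + 1)) (f 0) := by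
  rw [hasSum_iff_tendsto_nat_of_nonneg (fun n => sub_nonneg.2 (hf n.le_succ))]
  simp only [Finset.sum_range_sub']
  simpa using tendsto_const_nhds.sub h0

lemma tendsto_inv_add_nat (x : ℝ) :
    Filter.Tendsto (fun n : ℕ => 1 / (x + n)) Filter.atTop (nhds 0) := by
  simp only [one_div]
  exact (Filter.tendsto_atTop_add_const_left _ x tendsto_natCast_atTop_atTop).inv_tendsto_atTop

lemma hasSum_inv_sub {x : ℝ} (hx : 0 < x) :
    HasSum (fun n : ℕ => 1 / (x + n) - 1 / (x + (n + 1 : ℕ))) (1 / x) := by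
  have := hasSum_sub_succ (f := fun n : ℕ => 1 / (x + n)) (fun m n h => by
    have : (m : ℝ) ≤ n := by exact_mod_cast h
    dsimp only
    gcongr) (tendsto_inv_add_nat x)
  simpa using this

lemma hasSum_inv_sq_sub {x : ℝ} (hx : 0 < x) :
    HasSum (fun n : ℕ => 1 / (x + n) ^ 2 - 1 / (x + (n + 1 : ℕ)) ^ 2) (1 / x ^ 2) := by
  have := hasSum_sub_succ (f := fun n : ℕ => 1 / (x + n) ^ 2) (fun m n h => by
    have : (m : ℝ) ≤ n := by exact_mod_cast h
    dsimp only
    gcongr) (by simpa [div_pow] using (tendsto_inv_add_nat x).pow 2)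
  simpa using this

/-- The general term of the series for `x - x² ∑_{n ≥ 1} 1/(x+n)²`. -/
noncomputable def gapTerm (x : ℝ) (n : ℕ) : ℝ := x ^ 2 / ((x + (n + 1 : ℕ)) ^ 2 * (x + n))

/-- The function `x - x² ∑_{n ≥ 1} 1/(x+n)²`, written as a series of positive terms. -/
noncomputable def gap (x : ℝ) : ℝ := ∑' n : ℕ, gapTerm x n

lemma gapTerm_nonneg {x : ℝ} (hx : 0 < x) (n : ℕ) : 0 ≤ gapTerm x n := by
  unfold gapTerm; positivity

lemma gapTerm_le {x : ℝ} (hx : 0 < x) (n : ℕ) :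
    gapTerm x n ≤ x ^ 2 / 2 * (1 / (x + n) ^ 2 - 1 / (x + (n + 1 : ℕ)) ^ 2) := by
  have hy : 0 < x + n := by positivity
  rw [gapTerm, Nat.cast_succ, ← add_assoc]
  generalize x + (n : ℝ) = y at hy
  have : x ^ 2 / 2 * (1 / y ^ 2 - 1 / (y + 1) ^ 2) - x ^ 2 / ((y + 1) ^ 2 * y)
      = x ^ 2 / (2 * y ^ 2 * (y + 1) ^ 2) := by
    field_simp
    ring
  have h2 : 0 ≤ x ^ 2 / (2 * y ^ 2 * (y + 1) ^ 2) := by positivity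
  linarith

lemma summable_gapTerm {x : ℝ} (hx : 0 < x) : Summable (gapTerm x) :=
  Summable.of_nonneg_of_le (gapTerm_nonneg hx) (gapTerm_le hx)
    ((hasSum_inv_sq_sub hx).summable.mul_left _)

lemma gap_nonneg {x : ℝ} (hx : 0 < x) : 0 ≤ gap x := tsum_nonneg (gapTerm_nonneg hx)

lemma gap_le_half {x : ℝ} (hx : 0 < x) : gap x ≤ 1 / 2 := by
  have h := (summable_gapTerm hx).hasSum
  have := hasSum_le (gapTerm_le hx) h ((hasSum_inv_sq_sub hx).mul_left (x ^ 2 / 2))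
  refine this.trans (le_of_eq ?_)
  field_simp

lemma gapTerm_mono {t v : ℝ} (ht : 0 < t) (htv : t ≤ v) (hv : v ≤ 1) (n : ℕ) :
    gapTerm t n ≤ gapTerm v n := by
  have hv0 : 0 < v := ht.trans_le htv
  unfold gapTerm
  rw [div_le_div_iff₀ (by positivity) (by positivity)]
  have htv1 : t * v ≤ 1 := by nlinarith
  rcases Nat.eq_zero_or_pos n with rfl | hn
  · have h : t * (v + 1) ^ 2 ≤ v * (t + 1) ^ 2 := by
      nlinarith [mul_nonneg (sub_nonneg.2 htv) (sub_nonneg.2 htv1)]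
    have := mul_le_mul_of_nonneg_left h (mul_pos ht hv0).le
    simp only [zero_add, Nat.cast_one, Nat.cast_zero, add_zero]
    linarith
  · have hn1 : (1 : ℝ) ≤ n := by exact_mod_cast hn
    push_cast
    have h1 : t * (v + (n + 1)) ≤ v * (t + (n + 1)) := by nlinarith
    have h2 : t * (v + (n + 1)) * (v + n) ≤ v * (t + (n + 1)) * (t + n) := by
      nlinarith [mul_nonneg (sub_nonneg.2 htv) (sub_nonneg.2 (htv1.trans
        (show (1 : ℝ) ≤ n * (n + 1) by nlinarith)))]
    have := mul_le_mul h1 h2 (by positivity) (by positivity)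
    linarith

lemma gap_mono {t v : ℝ} (ht : 0 < t) (htv : t ≤ v) (hv : v ≤ 1) : gap t ≤ gap v :=
  Summable.tsum_le_tsum (gapTerm_mono ht htv hv) (summable_gapTerm ht)
    (summable_gapTerm (ht.trans_le htv))

lemma tsum_BSK_add {x : ℝ} (hx : 0 < x) :
    ∑' n : ℕ, BSK (x + (n + 1 : ℕ)) = BSK x * (x - gap x) := by
  have h := (((hasSum_inv_sub hx).mul_left (x ^ 2)).sub (summable_gapTerm hx).hasSum).mul_left
    (BSK x)
  have e : BSK x * (x ^ 2 * (1 / x) - ∑' n, gapTerm x n) = BSK x * (x - gap x) := by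
    rw [gap]; field_simp
  rw [← e, ← h.tsum_eq]
  refine tsum_congr fun n => ?_
  have e2 : Real.sin (Real.pi * (x + (n + 1 : ℕ))) ^ 2 = Real.sin (Real.pi * x) ^ 2 := by
    rw [mul_add, mul_comm Real.pi ((n + 1 : ℕ) : ℝ), Real.sin_add_nat_mul_pi, mul_pow, ← pow_mul,
      mul_comm _ 2, pow_mul]
    simp
  have hn : 0 < x + (n + 1 : ℕ) := by positivity
  have hy : 0 < x + n := by positivity
  rw [BSK_eq hx.ne', BSK_eq hn.ne', div_pow, e2, div_pow, gapTerm]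
  rw [Nat.cast_succ, ← add_assoc] at hn ⊢
  generalize x + (n : ℝ) = y at hy hn
  have := Real.pi_ne_zero
  field_simp
  ring

lemma BSBminus_of_pos {x : ℝ} (hx : 0 < x) (hn : ∀ n : ℤ, x ≠ n) :
    BSBminus x = 1 - 2 * (BSK x * (1 - gap x)) := by
  have h := BSK_add_tsum x
  rw [BSBminus, BSH_eq hn]
  rw [tsum_BSK_add hx] at h ⊢
  linarith

lemma BSBminus_neg_of_pos {x : ℝ} (hx : 0 < x) (hn : ∀ n : ℤ, x ≠ n) :
    BSBminus (-x) = -1 - 2 * (BSK x * gap x) := by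
  have h := BSK_add_tsum (-x)
  have e : ∑' n : ℕ, BSK (-x - (n + 1 : ℕ)) = BSK x * (x - gap x) := by
    rw [← tsum_BSK_add hx]
    refine tsum_congr fun n => ?_
    rw [← BSK_neg]; congr 1; ring
  rw [BSBminus, BSH_eq fun n hnn => hn (-n) (by push_cast; linarith)]
  rw [e, BSK_neg] at h
  rw [e, BSK_neg]
  linarith

lemma BSK_mul_gap_add_le_one {t v : ℝ} (ht : 0 < t) (htv : t ≤ v) :
    BSK v * (1 - gap v) + BSK t * gap t ≤ 1 := by
  have hv := ht.trans_le htv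
  have a1 := gap_nonneg ht
  have a2 := gap_nonneg hv
  have a3 := gap_le_half ht
  have a4 := gap_le_half hv
  have b1 := BSK_nonneg t
  have b2 := BSK_nonneg v
  have b3 := BSK_le_one t
  have b4 := BSK_le_one v
  rcases le_total v 1 with h | h
  · have := gap_mono ht htv h
    nlinarith
  · have : BSK v ≤ 1 / 2 := by
      rw [BSK, if_neg hv.ne', div_pow, div_le_iff₀ (by positivity)]
      have h1 := Real.sin_sq_le_one (Real.pi * v)
      have h2 : 3 ≤ Real.pi * v := by nlinarith [Real.pi_gt_three]
      nlinarith
    nlinarith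

lemma ae_affine_ne_int {p : ℝ} (hp : p ≠ 0) (q : ℝ) : ∀ᵐ x : ℝ, ∀ n : ℤ, p * x + q ≠ n := by
  rw [ae_all_iff]
  intro n
  filter_upwards [Measure.ae_ne volume ((n - q) / p)] with x hx h
  apply hx
  field_simp
  linarith

lemma BSF_bounds {Δ a b : ℝ} (hΔ : 0 < Δ) (hab : a < b) {x : ℝ}
    (hu : ∀ n : ℤ, Δ * (x - a) ≠ n) (hv : ∀ n : ℤ, Δ * (b - x) ≠ n) :
    |BSF Δ a b x| ≤ 1 ∧
      0 ≤ Set.indicator (Set.Icc a b) (fun _ => (1 : ℝ)) x - BSF Δ a b x ∧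
      Set.indicator (Set.Icc a b) (fun _ => (1 : ℝ)) x - BSF Δ a b x ≤
        BSK (Δ * (x - a)) + BSK (Δ * (b - x)) := by
  have key : ∀ t v : ℝ, 0 < t → t ≤ v → (∀ n : ℤ, t ≠ n) → (∀ n : ℤ, v ≠ n) →
      |(1 / 2) * (BSBminus (-t) + BSBminus v)| ≤ 1 ∧
        0 ≤ 0 - (1 / 2) * (BSBminus (-t) + BSBminus v) ∧
        0 - (1 / 2) * (BSBminus (-t) + BSBminus v) ≤ BSK (-t) + BSK v := by
    intro t v ht htv hnt hnv
    have hv := ht.trans_le htv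
    rw [BSBminus_neg_of_pos ht hnt, BSBminus_of_pos hv hnv, BSK_neg, abs_le]
    have a1 := gap_nonneg ht
    have a2 := gap_nonneg hv
    have a3 := gap_le_half ht
    have a4 := gap_le_half hv
    have b1 := BSK_nonneg t
    have b2 := BSK_nonneg v
    have c := BSK_mul_gap_add_le_one ht htv
    have c1 : 0 ≤ BSK t * gap t := by positivity
    have c2 : 0 ≤ BSK v * (1 - gap v) := mul_nonneg b2 (by linarith)
    have c3 : BSK t * gap t ≤ BSK t := mul_le_of_le_one_right b1 (by linarith)
    have c4 : BSK v * (1 - gap v) ≤ BSK v := mul_le_of_le_one_right b2 (by linarith)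
    refine ⟨⟨?_, ?_⟩, ?_, ?_⟩ <;> linarith
  unfold BSF
  rcases lt_or_ge x a with hxa | hxa
  · have h := key (-(Δ * (x - a))) (Δ * (b - x)) (by nlinarith) (by nlinarith)
      (fun n hn => hu (-n) (by push_cast; linarith)) hv
    rw [Set.indicator_of_notMem (fun hx => hxa.not_ge hx.1)]
    rwa [neg_neg] at h
  rcases lt_or_ge b x with hxb | hxb
  · have h := key (-(Δ * (b - x))) (Δ * (x - a)) (by nlinarith) (by nlinarith)
      (fun n hn => hv (-n) (by push_cast; linarith)) hu
    rw [Set.indicator_of_notMem (fun hx => hxb.not_ge hx.2), add_comm (BSBminus (Δ * (x - a))),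
      add_comm (BSK (Δ * (x - a)))]
    rwa [neg_neg] at h
  rw [Set.indicator_of_mem (show x ∈ Set.Icc a b from ⟨hxa, hxb⟩)]
  have hu0 : 0 < Δ * (x - a) :=
    lt_of_le_of_ne (mul_nonneg hΔ.le (by linarith)) (fun h => hu 0 (by simpa using h.symm))
  have hv0 : 0 < Δ * (b - x) :=
    lt_of_le_of_ne (mul_nonneg hΔ.le (by linarith)) (fun h => hv 0 (by simpa using h.symm))
  rw [BSBminus_of_pos hu0 hu, BSBminus_of_pos hv0 hv]
  generalize Δ * (x - a) = u at *
  generalize Δ * (b - x) = v at *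
  have a1 := gap_nonneg hu0
  have a2 := gap_nonneg hv0
  have a3 := gap_le_half hu0
  have a4 := gap_le_half hv0
  have b1 := BSK_nonneg u
  have b2 := BSK_nonneg v
  have b3 := BSK_le_one u
  have b4 := BSK_le_one v
  have c1 : 0 ≤ BSK u * (1 - gap u) := mul_nonneg b1 (by linarith)
  have c2 : 0 ≤ BSK v * (1 - gap v) := mul_nonneg b2 (by linarith)
  have c3 : BSK u * (1 - gap u) ≤ BSK u := mul_le_of_le_one_right b1 (by linarith)
  have c4 : BSK v * (1 - gap v) ≤ BSK v := mul_le_of_le_one_right b2 (by linarith)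
  rw [abs_le]
  refine ⟨⟨?_, ?_⟩, ?_, ?_⟩ <;> linarith

lemma cos_two_pi_mul (x : ℝ) : Real.cos (2 * Real.pi * x) = 1 - 2 * Real.sin (Real.pi * x) ^ 2 := by
  rw [mul_assoc, Real.cos_two_mul, Real.cos_sq']; ring

lemma integral_cos_eq_BSK (x : ℝ) :
    ∫ s in (0 : ℝ)..1, 2 * (1 - s) * Real.cos (2 * Real.pi * s * x + 0) = BSK x := by
  by_cases hx : x = 0
  · have : ∀ s ∈ Set.uIcc (0 : ℝ) 1, HasDerivAt (fun s => 2 * s - s ^ 2) (2 * (1 - s)) s := by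
      intro s _
      refine (((hasDerivAt_id s).const_mul 2).sub (hasDerivAt_pow 2 s)).congr_deriv ?_
      norm_num
      ring
    simp only [hx, mul_zero, add_zero, Real.cos_zero, mul_one, BSK, if_true]
    rw [intervalIntegral.integral_eq_sub_of_hasDerivAt this
      (Continuous.intervalIntegrable (by fun_prop) _ _)]
    norm_num
  · have hc : 2 * Real.pi * x ≠ 0 := by simp [hx, Real.pi_ne_zero]
    have : ∀ s ∈ Set.uIcc (0 : ℝ) 1, HasDerivAt
        (fun s => 2 * (1 - s) * (Real.sin (2 * Real.pi * x * s) / (2 * Real.pi * x)) -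
          2 * Real.cos (2 * Real.pi * x * s) / (2 * Real.pi * x) ^ 2)
        (2 * (1 - s) * Real.cos (2 * Real.pi * s * x + 0)) s := by
      intro s _
      have h0 : HasDerivAt (fun s => 2 * Real.pi * x * s) (2 * Real.pi * x) s := by
        simpa using (hasDerivAt_id s).const_mul (2 * Real.pi * x)
      have h1 : HasDerivAt (fun s : ℝ => 2 * (1 - s)) (-2) s := by
        simpa using ((hasDerivAt_id s).const_sub 1).const_mul 2
      refine ((h1.mul (h0.sin.div_const (2 * Real.pi * x))).sub
        ((h0.cos.const_mul 2).div_const ((2 * Real.pi * x) ^ 2))).congr_deriv ?_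
      rw [show 2 * Real.pi * s * x + 0 = 2 * Real.pi * x * s by ring]
      generalize 2 * Real.pi * x = c at hc
      field_simp
      ring
    rw [intervalIntegral.integral_eq_sub_of_hasDerivAt this
      (Continuous.intervalIntegrable (by fun_prop) _ _), BSK, if_neg hx, mul_one,
      cos_two_pi_mul]
    have := Real.pi_ne_zero
    simp
    field_simp
    ring

lemma integral_sin_eq_mul_BSK (x : ℝ) :
    ∫ s in (0 : ℝ)..1, 2 / Real.pi * Real.cos (2 * Real.pi * s * x + -(Real.pi / 2)) =
      2 * x * BSK x := by
  have hp := Real.pi_ne_zero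
  simp only [← sub_eq_add_neg, Real.cos_sub_pi_div_two]
  by_cases hx : x = 0
  · simp [hx]
  · have hc : 2 * Real.pi * x ≠ 0 := by simp [hx, Real.pi_ne_zero]
    have : ∀ s ∈ Set.uIcc (0 : ℝ) 1, HasDerivAt
        (fun s => 2 / Real.pi * (-Real.cos (2 * Real.pi * x * s) / (2 * Real.pi * x)))
        (2 / Real.pi * Real.sin (2 * Real.pi * s * x)) s := by
      intro s _
      have h0 : HasDerivAt (fun s => 2 * Real.pi * x * s) (2 * Real.pi * x) s := by
        simpa using (hasDerivAt_id s).const_mul (2 * Real.pi * x)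
      refine ((h0.cos.neg.div_const (2 * Real.pi * x)).const_mul (2 / Real.pi)).congr_deriv ?_
      rw [show 2 * Real.pi * s * x = 2 * Real.pi * x * s by ring]
      generalize 2 * Real.pi * x = c at hc
      field_simp
    rw [intervalIntegral.integral_eq_sub_of_hasDerivAt this
      (Continuous.intervalIntegrable (by fun_prop) _ _), BSK, if_neg hx, mul_one,
      cos_two_pi_mul]
    simp
    field_simp
    ring

lemma measurable_BSK : Measurable BSK := by
  unfold BSK
  exact Measurable.ite (measurableSet_eq_fun measurable_id measurable_const) measurable_const
    (by fun_prop)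

lemma sq_mul_BSK_le (x : ℝ) : x ^ 2 * BSK x ≤ 1 := by
  by_cases hx : x = 0
  · simp [hx]
  rw [BSK_eq hx, mul_div_cancel₀ _ (pow_ne_zero 2 hx), div_pow, div_le_one (by positivity)]
  nlinarith [Real.sin_sq_le_one (Real.pi * x), Real.pi_gt_three]

lemma integrable_BSK : Integrable BSK := by
  refine (integrable_inv_one_add_sq.const_mul 2).mono' measurable_BSK.aestronglyMeasurable
    (Filter.Eventually.of_forall fun x => ?_)
  rw [Real.norm_of_nonneg (BSK_nonneg x), ← div_eq_mul_inv, le_div_iff₀ (by positivity)]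
  linarith [sq_mul_BSK_le x, BSK_le_one x]

/-- Partial sums of the series defining `BSBminus`. -/
noncomputable def minorantPartial (N : ℕ) (x : ℝ) : ℝ :=
  2 * x * BSK x - BSK x +
    ∑ n ∈ Finset.range N, (BSK (x - (n + 1 : ℕ)) - BSK (x + (n + 1 : ℕ)))

lemma measurable_minorantPartial (N : ℕ) : Measurable (minorantPartial N) := by
  have := measurable_BSK
  unfold minorantPartial
  fun_prop

lemma tendsto_minorantPartial {x : ℝ} (hx : ∀ n : ℤ, x ≠ n) :
    Filter.Tendsto (fun N => minorantPartial N x) Filter.atTop (nhds (BSBminus x)) := by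
  have h := ((summable_BSK_sub x).hasSum.sub (summable_BSK_add x).hasSum).tendsto_sum_nat
  have e : BSBminus x = 2 * x * BSK x - BSK x + (∑' n : ℕ, BSK (x - (n + 1 : ℕ)) -
      ∑' n : ℕ, BSK (x + (n + 1 : ℕ))) := by
    rw [BSBminus, BSH_eq hx]; ring
  rw [e]
  exact tendsto_const_nhds.add h

lemma abs_minorantPartial_le (N : ℕ) (x : ℝ) : |minorantPartial N x| ≤ 4 := by
  have h1 := (summable_BSK_sub x).sum_le_tsum (Finset.range N) fun _ _ => BSK_nonneg _
  have h2 := (summable_BSK_add x).sum_le_tsum (Finset.range N) fun _ _ => BSK_nonneg _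
  have h3 : 0 ≤ ∑ n ∈ Finset.range N, BSK (x - (n + 1 : ℕ)) :=
    Finset.sum_nonneg fun _ _ => BSK_nonneg _
  have h4 : 0 ≤ ∑ n ∈ Finset.range N, BSK (x + (n + 1 : ℕ)) :=
    Finset.sum_nonneg fun _ _ => BSK_nonneg _
  have h5 := BSK_add_tsum x
  have h6 := BSK_nonneg x
  have h7 : |x * BSK x| ≤ 1 := by
    rw [← sq_le_one_iff_abs_le_one, mul_pow]
    nlinarith [sq_mul_BSK_le x, BSK_le_one x, mul_nonneg (sq_nonneg x) h6]
  rw [abs_le] at h7 ⊢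
  rw [minorantPartial, Finset.sum_sub_distrib]
  constructor <;> linarith

lemma tendsto_minorantPartial_affine {p : ℝ} (hp : p ≠ 0) (q : ℝ) :
    ∀ᵐ x : ℝ, Filter.Tendsto (fun N => minorantPartial N (p * x + q)) Filter.atTop
      (nhds (BSBminus (p * x + q))) :=
  (ae_affine_ne_int hp q).mono fun _ => tendsto_minorantPartial

lemma aestronglyMeasurable_BSBminus {p : ℝ} (hp : p ≠ 0) (q : ℝ) :
    AEStronglyMeasurable (fun x : ℝ => BSBminus (p * x + q)) :=
  aestronglyMeasurable_of_tendsto_ae Filter.atTop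
    (fun N => ((measurable_minorantPartial N).comp (by fun_prop)).aestronglyMeasurable)
    (tendsto_minorantPartial_affine hp q)

/-- The product of `f` with `ψ` is integrable, with zero integral. -/
def Annihilates (ψ : ℝ → ℂ) (f : ℝ → ℝ) : Prop :=
  Integrable (fun x => (f x : ℂ) * ψ x) ∧ ∫ x, (f x : ℂ) * ψ x = 0

namespace Annihilates

variable {ψ : ℝ → ℂ} {f g : ℝ → ℝ}

lemma add (hf : Annihilates ψ f) (hg : Annihilates ψ g) :
    Annihilates ψ (fun x => f x + g x) := by
  have e : (fun x => ((f x + g x : ℝ) : ℂ) * ψ x) = fun x => f x * ψ x + g x * ψ x := by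
    ext x; push_cast; ring
  rw [Annihilates, e]
  exact ⟨hf.1.add hg.1, by rw [integral_add hf.1 hg.1, hf.2, hg.2, add_zero]⟩

lemma const_mul (c : ℝ) (hf : Annihilates ψ f) : Annihilates ψ (fun x => c * f x) := by
  have e : (fun x => ((c * f x : ℝ) : ℂ) * ψ x) = fun x => (c : ℂ) * (f x * ψ x) := by
    ext x; push_cast; ring
  rw [Annihilates, e]
  exact ⟨hf.1.const_mul _, by rw [integral_const_mul, hf.2, mul_zero]⟩

lemma sub (hf : Annihilates ψ f) (hg : Annihilates ψ g) :
    Annihilates ψ (fun x => f x - g x) := by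
  simpa [sub_eq_add_neg] using hf.add (hg.const_mul (-1))

end Annihilates

lemma integral_cos_mul_eq_zero {Δ : ℝ} {ψ : ℝ → ℂ} (hψ : Integrable ψ)
    (h : ∀ s : ℝ, |s| ≤ Δ → ∫ x : ℝ, Complex.exp ((2 * Real.pi * s * x : ℝ) * Complex.I) * ψ x = 0)
    {s : ℝ} (hs : |s| ≤ Δ) (c : ℝ) :
    ∫ x : ℝ, (Real.cos (2 * Real.pi * s * x + c) : ℂ) * ψ x = 0 := by
  have hi : ∀ s : ℝ, Integrable
      fun x : ℝ => Complex.exp ((2 * Real.pi * s * x : ℝ) * Complex.I) * ψ x := fun s =>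
    hψ.bdd_mul (c := 1) (by fun_prop) (Filter.Eventually.of_forall fun x => by
      rw [Complex.norm_exp_ofReal_mul_I])
  have e : ∀ x : ℝ, (Real.cos (2 * Real.pi * s * x + c) : ℂ) * ψ x =
      Complex.exp (c * Complex.I) / 2 *
        (Complex.exp ((2 * Real.pi * s * x : ℝ) * Complex.I) * ψ x) +
      Complex.exp (-c * Complex.I) / 2 *
        (Complex.exp ((2 * Real.pi * (-s) * x : ℝ) * Complex.I) * ψ x) := fun x => by
    rw [Complex.ofReal_cos, Complex.cos, show ((2 * Real.pi * s * x + c : ℝ) : ℂ) * Complex.I =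
      (2 * Real.pi * s * x : ℝ) * Complex.I + c * Complex.I by push_cast; ring,
      show -((2 * Real.pi * s * x + c : ℝ) : ℂ) * Complex.I =
      (2 * Real.pi * (-s) * x : ℝ) * Complex.I + -c * Complex.I by push_cast; ring,
      Complex.exp_add, Complex.exp_add]
    ring
  simp_rw [e]
  rw [integral_add ((hi s).const_mul _) ((hi (-s)).const_mul _), integral_const_mul,
    integral_const_mul, h s hs, h (-s) (by rwa [abs_neg])]
  simp

lemma annihilates_integral_cos {Δ : ℝ} {ψ : ℝ → ℂ} (hψ : Integrable ψ)
    (h : ∀ s : ℝ, |s| ≤ Δ → ∫ x : ℝ, Complex.exp ((2 * Real.pi * s * x : ℝ) * Complex.I) * ψ x = 0)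
    {w : ℝ → ℝ} (hw : Continuous w) {p : ℝ} (hp : |p| ≤ Δ) (q r : ℝ) :
    Annihilates ψ fun x =>
      ∫ s in (0 : ℝ)..1, w s * Real.cos (2 * Real.pi * s * (p * x + q) + r) := by
  have hw' : Integrable (fun s => (w s : ℂ)) (volume.restrict (Set.Ioc 0 1)) :=
    ((Complex.continuous_ofReal.comp hw).integrableOn_Icc (a := 0) (b := 1)).mono_set
      Set.Ioc_subset_Icc_self
  have hI : Integrable (Function.uncurry fun (x s : ℝ) =>
      ((w s * Real.cos (2 * Real.pi * s * (p * x + q) + r) : ℝ) : ℂ) * ψ x)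
      (volume.prod (volume.restrict (Set.Ioc 0 1))) := by
    have h2 := (hψ.mul_prod hw').bdd_mul (c := 1)
      (f := fun z : ℝ × ℝ => (Real.cos (2 * Real.pi * z.2 * (p * z.1 + q) + r) : ℂ))
      (by fun_prop) (Filter.Eventually.of_forall fun z => by
        rw [Complex.norm_real]; exact Real.abs_cos_le_one _)
    refine h2.congr (Filter.Eventually.of_forall fun z => ?_)
    simp only [Function.uncurry]
    push_cast
    ring
  have e : (fun x => ((∫ s in (0 : ℝ)..1,
      w s * Real.cos (2 * Real.pi * s * (p * x + q) + r) : ℝ) : ℂ) * ψ x) =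
      fun x => ∫ s in Set.Ioc (0 : ℝ) 1,
        ((w s * Real.cos (2 * Real.pi * s * (p * x + q) + r) : ℝ) : ℂ) * ψ x := by
    ext x
    rw [← intervalIntegral.integral_ofReal, intervalIntegral.integral_of_le zero_le_one,
      integral_mul_const]
  rw [Annihilates, e]
  refine ⟨hI.integral_prod_left, ?_⟩
  rw [integral_integral_swap hI]
  refine setIntegral_eq_zero_of_forall_eq_zero fun s hs => ?_
  have hsp : |s * p| ≤ Δ := by
    rw [abs_mul, abs_of_pos hs.1]
    exact (mul_le_of_le_one_left (abs_nonneg p) hs.2).trans hp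
  have := integral_cos_mul_eq_zero hψ h hsp (2 * Real.pi * s * q + r)
  rw [← mul_zero (w s : ℂ), ← this, ← integral_const_mul]
  refine integral_congr_ae (Filter.Eventually.of_forall fun x => ?_)
  simp only
  rw [show 2 * Real.pi * s * (p * x + q) + r = 2 * Real.pi * (s * p) * x +
    (2 * Real.pi * s * q + r) by ring]
  push_cast
  ring

lemma annihilates_minorantPartial {Δ : ℝ} {ψ : ℝ → ℂ} (hψ : Integrable ψ)
    (h : ∀ s : ℝ, |s| ≤ Δ → ∫ x : ℝ, Complex.exp ((2 * Real.pi * s * x : ℝ) * Complex.I) * ψ x = 0)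
    {p : ℝ} (hp : |p| ≤ Δ) (q : ℝ) (N : ℕ) :
    Annihilates ψ fun x => minorantPartial N (p * x + q) := by
  have hK : ∀ q, Annihilates ψ fun x => BSK (p * x + q) := fun q => by
    have := annihilates_integral_cos hψ h (w := fun s => 2 * (1 - s)) (by fun_prop) hp q 0
    simpa only [integral_cos_eq_BSK] using this
  have hS : Annihilates ψ fun x => 2 * (p * x + q) * BSK (p * x + q) := by
    have := annihilates_integral_cos hψ h (w := fun _ => 2 / Real.pi) (by fun_prop) hp q
      (-(Real.pi / 2))
    simpa only [integral_sin_eq_mul_BSK] using this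
  induction N with
  | zero => simpa [minorantPartial] using hS.sub (hK q)
  | succ N ih =>
    have e : (fun x => minorantPartial (N + 1) (p * x + q)) = fun x =>
        minorantPartial N (p * x + q) +
          (BSK (p * x + (q - (N + 1 : ℕ))) - BSK (p * x + (q + (N + 1 : ℕ)))) := by
      ext x
      rw [minorantPartial, Finset.sum_range_succ, minorantPartial, ← add_sub_assoc, ← add_assoc]
      ring_nf
    rw [e]
    exact ih.add ((hK _).sub (hK _))

lemma annihilates_BSBminus {Δ : ℝ} {ψ : ℝ → ℂ} (hψ : Integrable ψ)
    (h : ∀ s : ℝ, |s| ≤ Δ → ∫ x : ℝ, Complex.exp ((2 * Real.pi * s * x : ℝ) * Complex.I) * ψ x = 0)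
    {p : ℝ} (hp : |p| ≤ Δ) (hp0 : p ≠ 0) (q : ℝ) :
    Annihilates ψ fun x => BSBminus (p * x + q) := by
  have hm : ∀ N, AEStronglyMeasurable
      (fun x => (minorantPartial N (p * x + q) : ℂ) * ψ x) := fun N =>
    (annihilates_minorantPartial hψ h hp q N).1.aestronglyMeasurable
  have hb : ∀ N, ∀ᵐ x, ‖(minorantPartial N (p * x + q) : ℂ) * ψ x‖ ≤ 4 * ‖ψ x‖ := fun N =>
    Filter.Eventually.of_forall fun x => by
      rw [norm_mul, Complex.norm_real]
      exact mul_le_mul_of_nonneg_right (abs_minorantPartial_le _ _) (norm_nonneg _)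
  have hl : ∀ᵐ x, Filter.Tendsto (fun N => (minorantPartial N (p * x + q) : ℂ) * ψ x)
      Filter.atTop (nhds ((BSBminus (p * x + q) : ℂ) * ψ x)) :=
    (tendsto_minorantPartial_affine hp0 q).mono fun x hx =>
      ((Complex.continuous_ofReal.tendsto _).comp hx).mul_const _
  have hbd : Integrable fun x => 4 * ‖ψ x‖ := hψ.norm.const_mul 4
  constructor
  · refine hbd.mono' (aestronglyMeasurable_of_tendsto_ae Filter.atTop hm hl) ?_
    filter_upwards [hl, ae_all_iff.2 hb] with x hx hxb
    exact le_of_tendsto' hx.norm hxb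
  · have := tendsto_integral_of_dominated_convergence _ hm hbd hb hl
    simp only [(annihilates_minorantPartial hψ h hp q _).2] at this
    exact tendsto_nhds_unique this tendsto_const_nhds

lemma exists_bandlimited : ∃ φ : ℝ → ℂ, Continuous φ ∧ Integrable φ ∧ (∃ M, ∀ x, ‖φ x‖ ≤ M) ∧
    φ 0 = 1 ∧ ∀ t : ℝ, 1 ≤ |t| →
      ∫ x : ℝ, Complex.exp ((-2 * Real.pi * x * t : ℝ) * Complex.I) * φ x = 0 := by
  let f : ContDiffBump (0 : ℝ) := ⟨1 / 2, 1, by norm_num, by norm_num⟩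
  let g : ℝ → ℂ := fun x => (f.normed volume x : ℂ)
  have hs : Function.support g ⊆ Metric.ball 0 1 := by
    rw [← show Function.support (f.normed volume) = Metric.ball 0 1 from f.support_normed_eq]
    intro x hx hx0
    exact hx (by simp [g, hx0])
  have hgc : HasCompactSupport g := (f.hasCompactSupport_normed).comp_left (g := Complex.ofReal)
    Complex.ofReal_zero
  have hgd : ContDiff ℝ (⊤ : ℕ∞) g := Complex.ofRealCLM.contDiff.comp f.contDiff_normed
  let G : SchwartzMap ℝ ℂ := hgc.toSchwartzMap hgd
  have hG : ∀ x, G x = g x := fun x => rfl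
  let φ : SchwartzMap ℝ ℂ := FourierTransform.fourierInv G
  have hφ : FourierTransform.fourier φ = G := by simp [φ]
  refine ⟨φ, φ.continuous, φ.integrable, ?_, ?_, fun t ht => ?_⟩
  · obtain ⟨M, -, hM⟩ := φ.decay 0 0
    exact ⟨M, fun x => by simpa using hM x⟩
  · have : φ 0 = ∫ v : ℝ, g v := by
      simp only [φ, SchwartzMap.fourierInv_coe, Real.fourierInv_eq]
      simp [hG]
    rw [this]
    simp only [g]
    rw [integral_complex_ofReal, f.integral_normed, Complex.ofReal_one]
  · have h1 : (FourierTransform.fourier φ : SchwartzMap ℝ ℂ) t = 0 := by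
      rw [hφ, hG]
      by_contra hne
      have := hs hne
      rw [mem_ball_zero_iff, Real.norm_eq_abs] at this
      linarith
    rw [SchwartzMap.fourier_coe, Real.fourier_eq'] at h1
    rw [← h1]
    refine integral_congr_ae (Filter.Eventually.of_forall fun x => ?_)
    simp only [smul_eq_mul]
    congr 3
    simp
    ring

lemma BSF_eq (Δ a b x : ℝ) : BSF Δ a b x =
    1 / 2 * (BSBminus (Δ * x + -(Δ * a)) + BSBminus (-Δ * x + Δ * b)) := by
  rw [BSF, show Δ * (x - a) = Δ * x + -(Δ * a) by ring,
    show Δ * (b - x) = -Δ * x + Δ * b by ring]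

lemma BSF_bounds_ae {Δ a b : ℝ} (hΔ : 0 < Δ) (hab : a < b) :
    ∀ᵐ x : ℝ, |BSF Δ a b x| ≤ 1 ∧
      0 ≤ Set.indicator (Set.Icc a b) (fun _ => (1 : ℝ)) x - BSF Δ a b x ∧
      Set.indicator (Set.Icc a b) (fun _ => (1 : ℝ)) x - BSF Δ a b x ≤
        BSK (Δ * (x - a)) + BSK (Δ * (b - x)) := by
  filter_upwards [ae_affine_ne_int hΔ.ne' (-(Δ * a)),
    ae_affine_ne_int (neg_ne_zero.2 hΔ.ne') (Δ * b)] with x h1 h2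
  refine BSF_bounds hΔ hab (fun n => ?_) fun n => ?_
  · convert h1 n using 1; ring
  · convert h2 n using 1; ring

lemma integrable_BSK_add {Δ : ℝ} (hΔ : 0 < Δ) (a b : ℝ) :
    Integrable fun x => BSK (Δ * (x - a)) + BSK (Δ * (b - x)) :=
  ((integrable_BSK.comp_mul_left' hΔ.ne').comp_sub_right a).add
    ((integrable_BSK.comp_mul_left' hΔ.ne').comp_sub_left b)

lemma integral_BSK_add {Δ : ℝ} (hΔ : 0 < Δ) (a b : ℝ) :
    ∫ x, (BSK (Δ * (x - a)) + BSK (Δ * (b - x))) = 2 * (∫ x, BSK x) / Δ := by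
  rw [integral_add ((integrable_BSK.comp_mul_left' hΔ.ne').comp_sub_right a)
    ((integrable_BSK.comp_mul_left' hΔ.ne').comp_sub_left b),
    integral_sub_right_eq_self (fun x => BSK (Δ * x)) a,
    integral_sub_left_eq_self (fun x => BSK (Δ * x)) volume b, Measure.integral_comp_mul_left,
    abs_of_pos (inv_pos.2 hΔ), smul_eq_mul]
  ring

lemma integrable_indicator_Icc (a b : ℝ) :
    Integrable (Set.indicator (Set.Icc a b) fun _ => (1 : ℝ)) :=
  (integrable_indicator_iff measurableSet_Icc).2 (integrableOn_const (by simp))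

lemma integrable_BSF {Δ a b : ℝ} (hΔ : 0 < Δ) (hab : a < b) : Integrable (BSF Δ a b) := by
  have hm : AEStronglyMeasurable (BSF Δ a b) := by
    rw [funext (BSF_eq Δ a b)]
    exact ((aestronglyMeasurable_BSBminus hΔ.ne' _).add
      (aestronglyMeasurable_BSBminus (neg_ne_zero.2 hΔ.ne') _)).const_mul _
  have h : Integrable fun x => Set.indicator (Set.Icc a b) (fun _ => (1 : ℝ)) x - BSF Δ a b x := by
    refine (integrable_BSK_add hΔ a b).mono'
      ((integrable_indicator_Icc a b).aestronglyMeasurable.sub hm) ?_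
    filter_upwards [BSF_bounds_ae hΔ hab] with x hx
    rw [Real.norm_of_nonneg hx.2.1]
    exact hx.2.2
  exact ((integrable_indicator_Icc a b).sub h).congr (Filter.Eventually.of_forall fun x => by simp)

lemma fourier_BSF_eq_zero {Δ a b : ℝ} (hΔ : 0 < Δ) (hab : a < b) {y : ℝ} (hy : Δ ≤ |y|) :
    ∫ x : ℝ, (BSF Δ a b x : ℂ) * Complex.exp (((-2) * Real.pi * x * y : ℝ) * Complex.I) = 0 := by
  obtain ⟨φ, hφc, hφi, ⟨M, hM⟩, hφ0, hφ⟩ := exists_bandlimited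
  let ε : ℕ → ℝ := fun n => 1 / ((n : ℝ) + 1)
  have hε0 : ∀ n, 0 < ε n := fun n => by positivity
  have hε : Filter.Tendsto ε Filter.atTop (nhds 0) := tendsto_one_div_add_atTop_nhds_zero_nat
  let θ : ℕ → ℝ → ℂ := fun n x => φ (ε n * Δ * x) *
    Complex.exp (((-2) * Real.pi * x * (y * (1 + ε n)) : ℝ) * Complex.I)
  have hθi : ∀ n, Integrable (θ n) := fun n =>
    (hφi.comp_mul_left' (mul_pos (hε0 n) hΔ).ne').mul_bdd (c := 1) (by fun_prop)
      (Filter.Eventually.of_forall fun x => by rw [Complex.norm_exp_ofReal_mul_I])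
  have hθ : ∀ n, ∀ s : ℝ, |s| ≤ Δ →
      ∫ x : ℝ, Complex.exp ((2 * Real.pi * s * x : ℝ) * Complex.I) * θ n x = 0 := by
    intro n s hs
    have hc := mul_pos (hε0 n) hΔ
    have e : ∀ x : ℝ, Complex.exp ((2 * Real.pi * s * x : ℝ) * Complex.I) * θ n x =
        (fun u : ℝ => Complex.exp ((-2 * Real.pi * u * ((y * (1 + ε n) - s) / (ε n * Δ)) : ℝ) *
          Complex.I) * φ u) (ε n * Δ * x) := fun x => by
      simp only [θ]
      rw [mul_left_comm, ← Complex.exp_add, mul_comm]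
      congr 2
      rw [← add_mul, ← Complex.ofReal_add]
      congr 2
      have := (hε0 n).ne'
      field_simp
      ring
    simp_rw [e]
    rw [Measure.integral_comp_mul_left (fun u : ℝ => Complex.exp ((-2 * Real.pi * u *
      ((y * (1 + ε n) - s) / (ε n * Δ)) : ℝ) * Complex.I) * φ u), hφ, smul_zero]
    rw [abs_div, abs_of_pos hc, le_div_iff₀ hc, one_mul]
    have h1 := abs_sub_abs_le_abs_sub (y * (1 + ε n)) s
    rw [abs_mul, abs_of_pos (show 0 < 1 + ε n by linarith [hε0 n])] at h1
    nlinarith [mul_le_mul_of_nonneg_right hy (hε0 n).le]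
  have hzero : ∀ n, ∫ x : ℝ, (BSF Δ a b x : ℂ) * θ n x = 0 := fun n => by
    have h1 := annihilates_BSBminus (hθi n) (hθ n) (abs_of_pos hΔ).le hΔ.ne' (-(Δ * a))
    have h2 := annihilates_BSBminus (hθi n) (hθ n) (p := -Δ) (by rw [abs_neg, abs_of_pos hΔ])
      (neg_ne_zero.2 hΔ.ne') (Δ * b)
    simp_rw [BSF_eq]
    exact ((h1.add h2).const_mul (1 / 2)).2
  have hF : Integrable fun x => (BSF Δ a b x : ℂ) := (integrable_BSF hΔ hab).ofReal
  have hlim := tendsto_integral_of_dominated_convergence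
    (F := fun n x => (BSF Δ a b x : ℂ) * θ n x)
    (f := fun x => (BSF Δ a b x : ℂ) * Complex.exp (((-2) * Real.pi * x * y : ℝ) * Complex.I))
    (μ := volume) (fun x => ‖(BSF Δ a b x : ℂ)‖ * M)
    (fun n => hF.aestronglyMeasurable.mul (hθi n).aestronglyMeasurable) (hF.norm.mul_const M)
    (fun n => Filter.Eventually.of_forall fun x => by
      rw [norm_mul]
      refine mul_le_mul_of_nonneg_left ?_ (norm_nonneg _)
      simp only [θ]
      rw [norm_mul, Complex.norm_exp_ofReal_mul_I, mul_one]
      exact hM _)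
    (Filter.Eventually.of_forall fun x => by
      refine tendsto_const_nhds.mul ?_
      have hcont : Continuous fun e : ℝ => φ (e * Δ * x) *
          Complex.exp (((-2) * Real.pi * x * (y * (1 + e)) : ℝ) * Complex.I) := by fun_prop
      have := (hcont.tendsto 0).comp hε
      simpa [hφ0, Function.comp_def, θ] using this)
  simp only [hzero] at hlim
  exact tendsto_nhds_unique hlim tendsto_const_nhds

lemma norm_fourier_BSF_sub_le {Δ a b : ℝ} (hΔ : 0 < Δ) (hab : a < b) (y : ℝ) :
    ‖(∫ x : ℝ, (BSF Δ a b x : ℂ) * Complex.exp (((-2) * Real.pi * x * y : ℝ) * Complex.I)) -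
      ∫ x in a..b, Complex.exp (((-2) * Real.pi * x * y : ℝ) * Complex.I)‖ ≤
        2 * (∫ x, BSK x) / Δ := by
  have hm : ∀ {f : ℝ → ℝ}, Integrable f → Integrable fun x =>
      (f x : ℂ) * Complex.exp (((-2) * Real.pi * x * y : ℝ) * Complex.I) := fun hf =>
    hf.ofReal.mul_bdd (c := 1) (by fun_prop)
      (Filter.Eventually.of_forall fun x => by rw [Complex.norm_exp_ofReal_mul_I])
  have e : ∫ x in a..b, Complex.exp (((-2) * Real.pi * x * y : ℝ) * Complex.I) =
      ∫ x : ℝ, ((Set.indicator (Set.Icc a b) (fun _ => (1 : ℝ)) x : ℝ) : ℂ) *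
        Complex.exp (((-2) * Real.pi * x * y : ℝ) * Complex.I) := by
    rw [intervalIntegral.integral_of_le hab.le, ← integral_Icc_eq_integral_Ioc,
      ← integral_indicator measurableSet_Icc]
    refine integral_congr_ae (Filter.Eventually.of_forall fun x => ?_)
    by_cases hx : x ∈ Set.Icc a b
    · simp [Set.indicator_of_mem hx]
    · simp [Set.indicator_of_notMem hx]
  rw [e, ← integral_sub (hm (integrable_BSF hΔ hab)) (hm (integrable_indicator_Icc a b)),
    ← integral_BSK_add hΔ a b]
  refine norm_integral_le_of_norm_le (integrable_BSK_add hΔ a b) ?_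
  filter_upwards [BSF_bounds_ae hΔ hab] with x hx
  rw [← sub_mul, norm_mul, Complex.norm_exp_ofReal_mul_I, mul_one, norm_sub_rev,
    ← Complex.ofReal_sub, Complex.norm_real, Real.norm_of_nonneg hx.2.1]
  exact hx.2.2

/-- Properties of the Beurling–Selberg minorant `F` of the indicator of `I = [a, b]`:
(i) almost everywhere, `|F| ≤ 1` and `0 ≤ 1_I − F ≤ K(Δ(·−a)) + K(Δ(b−·))`;
(ii) `F` is integrable and its Fourier transform vanishes for `|y| ≥ Δ`;
(iii) for an absolute constant `C > 0`, `|F̂(y) − 1̂_I(y)| ≤ C/Δ` whenever `|y| < Δ`. -/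
theorem stmt_19 :
    ∃ C : ℝ, 0 < C ∧ ∀ Δ a b : ℝ, 0 < Δ → a < b →
      (∀ᵐ x : ℝ, |BSF Δ a b x| ≤ 1 ∧
        0 ≤ Set.indicator (Set.Icc a b) (fun _ => (1 : ℝ)) x - BSF Δ a b x ∧
        Set.indicator (Set.Icc a b) (fun _ => (1 : ℝ)) x - BSF Δ a b x ≤
          BSK (Δ * (x - a)) + BSK (Δ * (b - x))) ∧
      Integrable (BSF Δ a b) ∧
      (∀ y : ℝ, Δ ≤ |y| →
        (∫ x : ℝ, (BSF Δ a b x : ℂ) *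
          Complex.exp (((-2) * Real.pi * x * y : ℝ) * Complex.I)) = 0) ∧
      (∀ y : ℝ, |y| < Δ →
        ‖(∫ x : ℝ, (BSF Δ a b x : ℂ) *
            Complex.exp (((-2) * Real.pi * x * y : ℝ) * Complex.I)) -
          ∫ x in a..b, Complex.exp (((-2) * Real.pi * x * y : ℝ) * Complex.I)‖ ≤ C / Δ) := by
  have h0 : 0 ≤ ∫ x, BSK x := integral_nonneg BSK_nonneg
  refine ⟨2 * (∫ x, BSK x) + 1, by linarith, fun Δ a b hΔ hab => ⟨BSF_bounds_ae hΔ hab,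
    integrable_BSF hΔ hab, fun y hy => fourier_BSF_eq_zero hΔ hab hy, fun y _ =>
      (norm_fourier_BSF_sub_le hΔ hab y).trans ?_⟩⟩
  gcongr
  linarith
end
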